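/- Let μ and ν be dominant integral weights of 𝔤 such that β := ν̄ − μ is a root, and suppose ⟨μ, α_j∨⟩ ≥ 2 for every simple root α_j. Then the 𝔤-invariant subspace of adj(𝔤) ⊗ V_μ ⊗ V_ν has dimension exactly 1. -/

import Mathlib

open scoped TensorProduct Classical
open LieAlgebra LieModule Module

namespace AdjPaper

variable {L : Type} [LieRing L] [LieAlgebra ℂ L]

/-- `χ` is a root of `L` relative to the Cartan subalgebra `H`: a nonzero linear functional
on `H` with nontrivial root space. -/
def IsRoot (H : LieSubalgebra ℂ L) [H.IsCartanSubalgebra] (χ : Module.Dual ℂ H) : Prop :=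
  χ ≠ 0 ∧ rootSpace H ⇑χ ≠ ⊥

/-- `t` is the coroot `χ∨` of the root `χ`: it lies in `⁅𝔤_χ, 𝔤_{-χ}⁆` and satisfies
`χ t = 2`. -/
def IsCoroot (H : LieSubalgebra ℂ L) [H.IsCartanSubalgebra] (χ : Module.Dual ℂ H) (t : H) : Prop :=
  χ t = 2 ∧ ∃ e ∈ rootSpace H ⇑χ, ∃ f ∈ rootSpace H ⇑(-χ), (t : L) = ⁅e, f⁆

/-- `α` enumerates the simple roots of a base of the root system of `(L, H)`. -/
structure IsBase (H : LieSubalgebra ℂ L) [H.IsCartanSubalgebra] {r : ℕ} (α : Fin r → Module.Dual ℂ H) : Prop where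
  isRoot : ∀ j, IsRoot H (α j)
  indep : LinearIndependent ℂ α
  pos_neg : ∀ χ : Module.Dual ℂ H, IsRoot H χ →
    (∃ c : Fin r → ℕ, χ = ∑ j, (c j : ℂ) • α j) ∨ (∃ c : Fin r → ℕ, χ = -∑ j, (c j : ℂ) • α j)

/-- `χ` is a positive root relative to the base `α`. -/
def IsPosRoot (H : LieSubalgebra ℂ L) [H.IsCartanSubalgebra] {r : ℕ} (α : Fin r → Module.Dual ℂ H)
    (χ : Module.Dual ℂ H) : Prop :=
  IsRoot H χ ∧ ∃ c : Fin r → ℕ, χ = ∑ j, (c j : ℂ) • α j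

/-- A weight `μ` is dominant integral: all its pairings `⟨μ, α_j∨⟩ = μ (hc j)` with the
simple coroots `hc j` are non-negative integers. -/
def IsDomInt {H : LieSubalgebra ℂ L} {r : ℕ} (hc : Fin r → H) (μ : Module.Dual ℂ H) : Prop :=
  ∀ j, ∃ n : ℕ, μ (hc j) = (n : ℂ)

/-- `V` is an irreducible `L`-module with highest weight `μ` (relative to the Cartan
subalgebra `H` and the base `α`): it is irreducible and possesses a nonzero vector of
`H`-weight `μ` annihilated by all positive root spaces. -/
def IsHWIrrep (H : LieSubalgebra ℂ L) [H.IsCartanSubalgebra] {r : ℕ} (α : Fin r → Module.Dual ℂ H)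
    (μ : Module.Dual ℂ H) (V : Type) [AddCommGroup V] [Module ℂ V]
    [LieRingModule L V] [LieModule ℂ L V] : Prop :=
  IsSimpleOrder (LieSubmodule ℂ L V) ∧
  ∃ v : V, v ≠ 0 ∧ (∀ x : H, ⁅(x : L), v⁆ = μ x • v) ∧
    ∀ χ : Module.Dual ℂ H, IsPosRoot H α χ → ∀ e ∈ rootSpace H ⇑χ, ⁅e, v⁆ = 0

/-- `W` is isomorphic to the dual representation `V*`: there is a nondegenerate
`𝔤`-invariant pairing `W × V → ℂ`. -/
def IsDualPair (W V : Type) [AddCommGroup W] [Module ℂ W] [LieRingModule L W]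
    [AddCommGroup V] [Module ℂ V] [LieRingModule L V] : Prop :=
  ∃ B : W →ₗ[ℂ] V →ₗ[ℂ] ℂ,
    (∀ w, (∀ v, B w v = 0) → w = 0) ∧ (∀ v, (∀ w, B w v = 0) → v = 0) ∧
    ∀ (x : L) (w : W) (v : V), B ⁅x, w⁆ v + B w ⁅x, v⁆ = 0

/-- `V` is an orthogonal representation: it has a nondegenerate invariant symmetric
bilinear form. -/
def IsOrthogonalRep (V : Type) [AddCommGroup V] [Module ℂ V] [LieRingModule L V] : Prop :=
  ∃ B : V →ₗ[ℂ] V →ₗ[ℂ] ℂ,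
    (∀ v w, B v w = B w v) ∧ (∀ v, (∀ w, B v w = 0) → v = 0) ∧
    ∀ (x : L) (v w : V), B ⁅x, v⁆ w + B v ⁅x, w⁆ = 0

/-- `V` is a symplectic representation: it has a nondegenerate invariant alternating
bilinear form. -/
def IsSymplecticRep (V : Type) [AddCommGroup V] [Module ℂ V] [LieRingModule L V] : Prop :=
  ∃ B : V →ₗ[ℂ] V →ₗ[ℂ] ℂ,
    (∀ v, B v v = 0) ∧ (∀ v, (∀ w, B v w = 0) → v = 0) ∧
    ∀ (x : L) (v w : V), B ⁅x, v⁆ w + B v ⁅x, w⁆ = 0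

variable (L) in
/-- The operator on `adj(𝔤) ⊗ V ⊗ V` exchanging the two copies of `V`. -/
noncomputable def swapMap (V : Type) [AddCommGroup V] [Module ℂ V] :
    (L ⊗[ℂ] (V ⊗[ℂ] V)) →ₗ[ℂ] (L ⊗[ℂ] (V ⊗[ℂ] V)) :=
  LinearMap.lTensor L (TensorProduct.comm ℂ V V).toLinearMap

variable (L) in
/-- The `𝔤`-invariant subspace of `adj(𝔤) ⊗ S²V`, realised inside `adj(𝔤) ⊗ V ⊗ V` as the
invariant vectors fixed by the swap of the two copies of `V`. -/
noncomputable def symSquareInvariants (V : Type) [AddCommGroup V] [Module ℂ V]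
    [LieRingModule L V] [LieModule ℂ L V] : Submodule ℂ (L ⊗[ℂ] (V ⊗[ℂ] V)) :=
  (maxTrivSubmodule ℂ L (L ⊗[ℂ] (V ⊗[ℂ] V)) : Submodule ℂ (L ⊗[ℂ] (V ⊗[ℂ] V))) ⊓
    LinearMap.ker (swapMap L V - LinearMap.id)

variable (L) in
/-- The `𝔤`-invariant subspace of `adj(𝔤) ⊗ Λ²V`, realised inside `adj(𝔤) ⊗ V ⊗ V` as the
invariant vectors anti-fixed by the swap of the two copies of `V`. -/
noncomputable def altSquareInvariants (V : Type) [AddCommGroup V] [Module ℂ V]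
    [LieRingModule L V] [LieModule ℂ L V] : Submodule ℂ (L ⊗[ℂ] (V ⊗[ℂ] V)) :=
  (maxTrivSubmodule ℂ L (L ⊗[ℂ] (V ⊗[ℂ] V)) : Submodule ℂ (L ⊗[ℂ] (V ⊗[ℂ] V))) ⊓
    LinearMap.ker (swapMap L V + LinearMap.id)

set_option linter.unusedSectionVars false
/-- Chevalley-type data for `(L, H)` together with the Casimir information. -/
structure Dat (H : LieSubalgebra ℂ L) (r : ℕ) where
  α : Fin r → Module.Dual ℂ H
  hc : Fin r → H
  e : Fin r → L
  f : Fin r → L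
  he : ∀ (x : H) i, ⁅(x : L), e i⁆ = α i x • e i
  hf : ∀ (x : H) i, ⁅(x : L), f i⁆ = -(α i x) • f i
  hef : ∀ i j, ⁅e i, f j⁆ = if i = j then (hc i : L) else 0
  two : ∀ i, α i (hc i) = 2
  indep : LinearIndependent ℂ α
  gen : ∀ S : LieSubalgebra ℂ L, (∀ i, e i ∈ S) → (∀ i, f i ∈ S) → S = ⊤
  N : ℕ
  es : Fin N → L
  fs : Fin N → L
  hes : ∀ s, es s ∈ LieSubalgebra.lieSpan ℂ L (Set.range e)
  hfs : ∀ s, fs s ∈ LieSubalgebra.lieSpan ℂ L (Set.range f)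
  c : Module.Dual ℂ H → ℂ
  cas : ∀ (Y : Type) [AddCommGroup Y] [Module ℂ Y] [LieRingModule L Y] [LieModule ℂ L Y],
    ∃ C : Y →ₗ[ℂ] Y, (∀ (x : L) y, C ⁅x, y⁆ = ⁅x, C y⁆) ∧
      ∀ (κ : Module.Dual ℂ H) (y : Y), (∀ x : H, ⁅(x : L), y⁆ = κ x • y) →
        C y = c κ • y + ∑ s, ⁅fs s, ⁅es s, y⁆⁆
  d : Fin r → ℝ
  d_pos : ∀ j, 0 < d j
  c_sub : ∀ (κ : Module.Dual ℂ H) (n : Fin r → ℕ),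
    c κ - c (κ - ∑ j, (n j : ℂ) • α j) =
      ∑ j, (n j : ℂ) * (d j : ℂ) * (2 * κ (hc j) - (∑ i, (n i : ℂ) • α i : Module.Dual ℂ H) (hc j) + 2)

namespace Dat
variable {H : LieSubalgebra ℂ L} {r : ℕ} (D : Dat H r)
variable {Y : Type} [AddCommGroup Y] [Module ℂ Y] [LieRingModule L Y] [LieModule ℂ L Y]

/-- Formal words in the lowering operators. -/
abbrev A (r : ℕ) := List (Fin r) →₀ ℂ

/-- Action of a word. -/
def wact (y : Y) : List (Fin r) → Y
  | [] => y
  | i :: w => ⁅D.f i, wact y w⁆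

/-- Action of formal linear combinations of words on a vector. -/
noncomputable def act (y : Y) : A r →ₗ[ℂ] Y := Finsupp.linearCombination ℂ (D.wact y)

/-- Formal left multiplication. -/
noncomputable def F (i : Fin r) : A r →ₗ[ℂ] A r := Finsupp.lmapDomain ℂ ℂ (List.cons i)

@[simp] lemma F_single (i : Fin r) (w : List (Fin r)) (c : ℂ) :
    F i (Finsupp.single w c) = Finsupp.single (i :: w) c := by
  simp [F]

@[simp] lemma act_single (y : Y) (w : List (Fin r)) (c : ℂ) :
    D.act y (Finsupp.single w c) = c • D.wact y w := by
  simp [act]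

lemma act_F (y : Y) (i : Fin r) (a : A r) : D.act y (F i a) = ⁅D.f i, D.act y a⁆ := by
  induction a using Finsupp.induction_linear with
  | zero => simp
  | add a b ha hb => simp [ha, hb]
  | single w c => simp [wact]

/-- The weight of a word. -/
noncomputable def wt (w : List (Fin r)) : Module.Dual ℂ H := ∑ j, (w.count j : ℂ) • D.α j

@[simp] lemma wt_nil : D.wt [] = 0 := by simp [wt]

lemma wt_cons (i : Fin r) (w : List (Fin r)) : D.wt (i :: w) = D.α i + D.wt w := by
  simp only [wt, List.count_cons, Nat.cast_add, add_smul, Finset.sum_add_distrib]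
  rw [add_comm]
  congr 1
  simp

/-- First part of the commutator with `e i`. -/
noncomputable def Epw (i : Fin r) : List (Fin r) → A r
  | [] => 0
  | j :: w => F j (Epw i w) + if i = j then Finsupp.single w (-(D.wt w (D.hc i))) else 0

/-- Second part of the commutator with `e i`. -/
noncomputable def Ehw (i : Fin r) : List (Fin r) → A r
  | [] => 0
  | j :: w => F j (Ehw i w) + if i = j then Finsupp.single w 1 else 0

noncomputable def Ep (i : Fin r) : A r →ₗ[ℂ] A r := Finsupp.linearCombination ℂ (D.Epw i)
noncomputable def Eh (i : Fin r) : A r →ₗ[ℂ] A r := Finsupp.linearCombination ℂ (Ehw i)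

@[simp] lemma Ep_single (i : Fin r) (w : List (Fin r)) (c : ℂ) :
    D.Ep i (Finsupp.single w c) = c • D.Epw i w := by simp [Ep]
@[simp] lemma Eh_single (i : Fin r) (w : List (Fin r)) (c : ℂ) :
    Eh i (Finsupp.single w c) = c • Ehw i w := by simp [Eh]

lemma h_wact (x : H) (y : Y) (w : List (Fin r)) :
    ⁅(x : L), D.wact y w⁆ = D.wact ⁅(x : L), y⁆ w - D.wt w x • D.wact y w := by
  induction w with
  | nil => simp [wact]
  | cons i w ih =>
    simp only [wact]
    rw [leibniz_lie, D.hf, ih, wt_cons]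
    simp only [neg_smul, neg_lie, smul_lie, lie_sub, lie_smul, LinearMap.add_apply, add_smul]
    abel

lemma h_wact' (x : H) (y : Y) (κ : Module.Dual ℂ H) (hy : ∀ x : H, ⁅(x : L), y⁆ = κ x • y)
    (w : List (Fin r)) : ⁅(x : L), D.wact y w⁆ = (κ - D.wt w) x • D.wact y w := by
  have : ∀ c : ℂ, D.wact (c • y) w = c • D.wact y w := by
    intro c
    induction w with
    | nil => rfl
    | cons i w ih => simp [wact, ih]
  rw [h_wact, hy, this, LinearMap.sub_apply, sub_smul]

lemma e_wact (i : Fin r) (y : Y) (w : List (Fin r)) :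
    ⁅D.e i, D.wact y w⁆ = D.wact ⁅D.e i, y⁆ w + D.act y (D.Epw i w)
      + D.act ⁅(D.hc i : L), y⁆ (Ehw i w) := by
  induction w with
  | nil => simp [wact, Epw, Ehw]
  | cons j w ih =>
    simp only [wact, Epw, Ehw, map_add, act_F]
    rw [leibniz_lie, D.hef, ih]
    split_ifs with h
    · subst h
      rw [h_wact]
      simp only [lie_add, act_single, one_smul, neg_smul]
      abel
    · simp

/-- Commutation of `e i` with words, as operators. -/
lemma e_act (i : Fin r) (y : Y) (a : A r) :
    ⁅D.e i, D.act y a⁆ = D.act ⁅D.e i, y⁆ a + D.act y (D.Ep i a)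
      + D.act ⁅(D.hc i : L), y⁆ (Eh i a) := by
  induction a using Finsupp.induction_linear with
  | zero => simp
  | add a b ha hb => simp only [map_add, lie_add, ha, hb]; abel
  | single w c => simp [e_wact]

lemma wact_smul (c : ℂ) (y : Y) (w : List (Fin r)) : D.wact (c • y) w = c • D.wact y w := by
  induction w with
  | nil => rfl
  | cons i w ih => simp [wact, ih]

lemma wact_add (y z : Y) (w : List (Fin r)) : D.wact (y + z) w = D.wact y w + D.wact z w := by
  induction w with
  | nil => rfl
  | cons i w ih => simp [wact, ih]

lemma act_smul (c : ℂ) (y : Y) (a : A r) : D.act (c • y) a = c • D.act y a := by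
  induction a using Finsupp.induction_linear with
  | zero => simp
  | add a b ha hb => simp [ha, hb]
  | single w d => rw [act_single, act_single, wact_smul, smul_comm]

lemma act_add' (y z : Y) (a : A r) : D.act (y + z) a = D.act y a + D.act z a := by
  induction a using Finsupp.induction_linear with
  | zero => simp
  | add a b ha hb => simp only [map_add, ha, hb]; abel
  | single w d => simp [wact_add]

@[simp] lemma act_zero' (a : A r) : D.act (0 : Y) a = 0 := by
  simpa using D.act_smul 0 (0 : Y) a

/-- `y` is a singular vector of weight `κ`. -/
def Sing (κ : Module.Dual ℂ H) (y : Y) : Prop :=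
  (∀ i, ⁅D.e i, y⁆ = 0) ∧ ∀ x : H, ⁅(x : L), y⁆ = κ x • y

/-- The operator `e i` on words at highest weight `κ`. -/
noncomputable def E (κ : Module.Dual ℂ H) (i : Fin r) : A r →ₗ[ℂ] A r :=
  D.Ep i + κ (D.hc i) • Eh i

lemma e_act_sing {κ : Module.Dual ℂ H} {y : Y} (hy : D.Sing κ y) (i : Fin r) (a : A r) :
    ⁅D.e i, D.act y a⁆ = D.act y (D.E κ i a) := by
  rw [e_act, hy.1, hy.2]
  simp [E, act_smul]

/-- words of length `< n`. -/
noncomputable def Lt (r n : ℕ) : Submodule ℂ (A r) := Finsupp.supported ℂ ℂ {w | w.length < n}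

lemma single_mem_Lt {n : ℕ} {w : List (Fin r)} (h : w.length < n) (c : ℂ) :
    Finsupp.single w c ∈ Lt r n := Finsupp.single_mem_supported ℂ c h

lemma Lt_mono {m n : ℕ} (h : m ≤ n) : Lt r m ≤ Lt r n :=
  Finsupp.supported_mono (fun _ hw => lt_of_lt_of_le hw h)

lemma map_mem_of_Lt {M : Type*} [AddCommGroup M] [Module ℂ M] (T : A r →ₗ[ℂ] M)
    (S : Submodule ℂ M) (n : ℕ)
    (h : ∀ w : List (Fin r), w.length < n → T (Finsupp.single w 1) ∈ S) (a : A r)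
    (ha : a ∈ Lt r n) : T a ∈ S := by
  rw [Lt, Finsupp.supported_eq_span_single] at ha
  induction ha using Submodule.span_induction with
  | mem x hx => obtain ⟨w, hw, rfl⟩ := hx; exact h w hw
  | zero => simp
  | add x y _ _ hx hy => rw [map_add]; exact S.add_mem hx hy
  | smul c x _ hx => rw [map_smul]; exact S.smul_mem c hx

lemma F_mem_Lt {n : ℕ} (i : Fin r) {a : A r} (ha : a ∈ Lt r n) : F i a ∈ Lt r (n + 1) :=
  map_mem_of_Lt (F i) _ n (fun w hw => by
    rw [F_single]; exact single_mem_Lt (by simpa using hw) _) a ha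

lemma Epw_mem (i : Fin r) (w : List (Fin r)) : D.Epw i w ∈ Lt r w.length := by
  induction w with
  | nil => exact Submodule.zero_mem _
  | cons j w ih =>
    refine Submodule.add_mem _ (F_mem_Lt j ih) ?_
    split_ifs
    · exact single_mem_Lt (by simp) _
    · exact Submodule.zero_mem _

lemma Ehw_mem (i : Fin r) (w : List (Fin r)) : Ehw i w ∈ Lt r w.length := by
  induction w with
  | nil => exact Submodule.zero_mem _
  | cons j w ih =>
    refine Submodule.add_mem _ (F_mem_Lt j ih) ?_
    split_ifs
    · exact single_mem_Lt (by simp) _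
    · exact Submodule.zero_mem _

lemma Ep_mem_Lt {n : ℕ} (i : Fin r) {a : A r} (ha : a ∈ Lt r n) : D.Ep i a ∈ Lt r (n - 1) :=
  map_mem_of_Lt (D.Ep i) _ n (fun w hw => by
    rw [Ep_single, one_smul]; exact Lt_mono (by omega) (D.Epw_mem i w)) a ha

lemma Eh_mem_Lt {n : ℕ} (i : Fin r) {a : A r} (ha : a ∈ Lt r n) : Eh i a ∈ Lt r (n - 1) :=
  map_mem_of_Lt (Eh i) _ n (fun w hw => by
    rw [Eh_single, one_smul]; exact Lt_mono (by omega) (Ehw_mem i w)) a ha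

lemma E_mem_Lt {n : ℕ} (κ : Module.Dual ℂ H) (i : Fin r) {a : A r} (ha : a ∈ Lt r n) :
    D.E κ i a ∈ Lt r (n - 1) :=
  Submodule.add_mem _ (D.Ep_mem_Lt i ha) (Submodule.smul_mem _ _ (Eh_mem_Lt i ha))

lemma exists_mem_Lt (a : A r) : ∃ n, a ∈ Lt r n := by
  induction a using Finsupp.induction_linear with
  | zero => exact ⟨0, Submodule.zero_mem _⟩
  | add a b ha hb =>
    obtain ⟨m, hm⟩ := ha
    obtain ⟨n, hn⟩ := hb
    exact ⟨max m n, Submodule.add_mem _ (Lt_mono (le_max_left _ _) hm)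
      (Lt_mono (le_max_right _ _) hn)⟩
  | single w c => exact ⟨w.length + 1, single_mem_Lt (by simp) c⟩

lemma Lt_zero {a : A r} (ha : a ∈ Lt r 0) : a = 0 := by
  have : Lt r 0 = ⊥ := by simp [Lt]
  simpa [this] using ha

/-- Homogeneous component. -/
noncomputable def hom (n : Fin r → ℕ) (a : A r) : A r :=
  a.filter (fun w => (fun j => w.count j) = n)

lemma hom_mem_Lt {m : ℕ} (n : Fin r → ℕ) {a : A r} (ha : a ∈ Lt r m) : hom n a ∈ Lt r m := by
  rw [Lt, Finsupp.mem_supported] at *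
  refine subset_trans ?_ ha
  simp only [hom, Finsupp.support_filter, Finset.coe_filter]
  exact fun x hx => hx.1

lemma hom_sum (a : A r) :
    a = ∑ n ∈ a.support.image (fun w => (fun j => w.count j : Fin r → ℕ)), hom n a := by
  ext w
  rw [Finsupp.finsetSum_apply]
  simp only [hom, Finsupp.filter_apply]
  rw [Finset.sum_ite_eq]
  split_ifs with h
  · rfl
  · simp only [Finset.mem_image, not_exists, not_and] at h
    by_contra hw
    exact h w (by simpa using hw) rfl

/-- homogeneous elements. -/
def IsHom (n : Fin r → ℕ) (a : A r) : Prop := ∀ w ∈ a.support, (fun j => w.count j) = n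

lemma isHom_hom (n : Fin r → ℕ) (a : A r) : IsHom n (hom n a) := by
  intro w hw
  simp only [hom, Finsupp.support_filter, Finset.mem_filter] at hw
  exact hw.2

lemma h_act_hom {κ : Module.Dual ℂ H} {y : Y} (hy : ∀ x : H, ⁅(x : L), y⁆ = κ x • y)
    {n : Fin r → ℕ} {a : A r} (ha : IsHom n a) (x : H) :
    ⁅(x : L), D.act y a⁆ = (κ - ∑ j, (n j : ℂ) • D.α j) x • D.act y a := by
  rw [act, Finsupp.linearCombination_apply, Finsupp.sum, lie_sum, Finset.smul_sum]
  refine Finset.sum_congr rfl fun w hw => ?_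
  rw [lie_smul, D.h_wact' x y κ hy, smul_comm]
  have : D.wt w = ∑ j, (n j : ℂ) • D.α j := by
    rw [← ha w hw]; rfl
  rw [this]

lemma wt_inj {n m : Fin r → ℕ} (h : ∑ j, (n j : ℂ) • D.α j = ∑ j, (m j : ℂ) • D.α j) : n = m := by
  have := Fintype.linearIndependent_iff.1 D.indep (fun j => (n j : ℂ) - m j) (by
    simp only [sub_smul, Finset.sum_sub_distrib, h, sub_self])
  funext j
  have := this j
  rw [sub_eq_zero] at this
  exact_mod_cast this

lemma isHom_zero {a : A r} (ha : IsHom 0 a) : a = Finsupp.single [] (a []) := by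
  ext w
  by_cases hw : w = []
  · simp [hw]
  · rw [Finsupp.single_apply, if_neg (Ne.symm hw)]
    by_contra h
    have := ha w (by simpa using h)
    cases w with
    | nil => exact hw rfl
    | cons i w =>
      have := congrFun this i
      simp at this

end Dat

namespace Dat
variable {H : LieSubalgebra ℂ L} {r : ℕ} (D : Dat H r)
variable {Y : Type} [AddCommGroup Y] [Module ℂ Y] [LieRingModule L Y] [LieModule ℂ L Y]

/-- Linear independence of weight vectors of distinct weights. -/
lemma wt_indep {ι : Type*} (χ : ι → Module.Dual ℂ H) (hinj : Function.Injective χ)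
    (s : Finset ι) : ∀ (v : ι → Y), (∀ n (x : H), ⁅(x : L), v n⁆ = χ n x • v n) →
    (∑ n ∈ s, v n = 0) → ∀ n ∈ s, v n = 0 := by
  induction s using Finset.induction_on with
  | empty => simp
  | insert m s hm ih =>
    intro v hv hs
    have key : ∀ n ∈ s, v n = 0 := by
      intro n hn
      have hne : χ n ≠ χ m := fun h => hm (hinj h ▸ hn)
      obtain ⟨x, hx⟩ : ∃ x, χ n x ≠ χ m x := by
        by_contra h
        push Not at h
        exact hne (LinearMap.ext h)
      have h1 : ∑ k ∈ s, (χ k x - χ m x) • v k = 0 := by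
        have h2 : ⁅(x : L), ∑ k ∈ insert m s, v k⁆ - χ m x • ∑ k ∈ insert m s, v k = 0 := by
          rw [hs]; simp
        rw [lie_sum, Finset.smul_sum, ← Finset.sum_sub_distrib, Finset.sum_insert hm, hv,
          sub_self, zero_add] at h2
        rw [← h2]
        exact Finset.sum_congr rfl fun k _ => by rw [hv, sub_smul]
      have h3 := ih (fun k => (χ k x - χ m x) • v k)
        (fun k y => by simp only [lie_smul, hv]; rw [smul_comm]) h1 n hn
      exact (smul_eq_zero.1 h3).resolve_left (sub_ne_zero.2 hx)
    intro n hn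
    rw [Finset.sum_insert hm, Finset.sum_eq_zero key, add_zero] at hs
    rcases Finset.mem_insert.1 hn with rfl | hn
    · exact hs
    · exact key n hn

lemma act_hom_eq_zero {κ : Module.Dual ℂ H} {y : Y} (hy : ∀ x : H, ⁅(x : L), y⁆ = κ x • y)
    {a : A r} (ha : D.act y a = 0) (n : Fin r → ℕ) : D.act y (hom n a) = 0 := by
  have h1 := ha
  rw [hom_sum a, map_sum] at h1
  have h2 := wt_indep (L := L) (H := H) (fun n : Fin r → ℕ => κ - ∑ j, (n j : ℂ) • D.α j)
    (fun n m h => D.wt_inj (by simpa using h)) _ (fun n => D.act y (hom n a))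
    (fun n x => D.h_act_hom hy (isHom_hom n a) x) h1
  by_cases hn : n ∈ a.support.image (fun w => (fun j => w.count j : Fin r → ℕ))
  · exact h2 n hn
  · have : hom n a = 0 := by
      ext w
      simp only [hom, Finsupp.filter_apply, Finsupp.coe_zero, Pi.zero_apply]
      split_ifs with h
      · by_contra hw
        exact hn (Finset.mem_image.2 ⟨w, by simpa using hw, h⟩)
      · rfl
    rw [this, map_zero]

/-- To prove that an element acts by zero it suffices to treat homogeneous components. -/
lemma act_eq_zero_of_hom {y : Y} {a : A r} (h : ∀ n, D.act y (hom n a) = 0) :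
    D.act y a = 0 := by
  rw [hom_sum a, map_sum]
  exact Finset.sum_eq_zero fun n _ => h n

/-- A subspace stable under the generators is stable under `L`. -/
lemma stable (P : Submodule ℂ Y) (he : ∀ i, ∀ p ∈ P, ⁅D.e i, p⁆ ∈ P)
    (hf : ∀ i, ∀ p ∈ P, ⁅D.f i, p⁆ ∈ P) (x : L) (p : Y) (hp : p ∈ P) : ⁅x, p⁆ ∈ P := by
  let S : LieSubalgebra ℂ L :=
    { carrier := {x | ∀ p ∈ P, ⁅x, p⁆ ∈ P}
      add_mem' := fun {a b} ha hb p hp => by rw [add_lie]; exact P.add_mem (ha p hp) (hb p hp)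
      zero_mem' := fun p hp => by rw [zero_lie]; exact P.zero_mem
      smul_mem' := fun c a ha p hp => by rw [smul_lie]; exact P.smul_mem c (ha p hp)
      lie_mem' := fun {a b} ha hb p hp => by
        rw [lie_lie]; exact P.sub_mem (ha _ (hb p hp)) (hb _ (ha p hp)) }
  have hS : S = ⊤ := D.gen S he hf
  have hx : x ∈ S := by rw [hS]; trivial
  exact hx p hp

/-- A linear map commuting with the generators commutes with `L`. -/
lemma commutes {Z : Type} [AddCommGroup Z] [Module ℂ Z] [LieRingModule L Z] [LieModule ℂ L Z]
    (Φ : Y →ₗ[ℂ] Z) (he : ∀ i u, Φ ⁅D.e i, u⁆ = ⁅D.e i, Φ u⁆)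
    (hf : ∀ i u, Φ ⁅D.f i, u⁆ = ⁅D.f i, Φ u⁆) (x : L) (u : Y) : Φ ⁅x, u⁆ = ⁅x, Φ u⁆ := by
  let S : LieSubalgebra ℂ L :=
    { carrier := {x | ∀ u, Φ ⁅x, u⁆ = ⁅x, Φ u⁆}
      add_mem' := fun {a b} ha hb p => by rw [add_lie, add_lie, map_add, ha, hb]
      zero_mem' := fun p => by simp
      smul_mem' := fun c a ha p => by rw [smul_lie, smul_lie, map_smul, ha]
      lie_mem' := fun {a b} ha hb p => by
        rw [lie_lie, lie_lie, map_sub, ha ⁅b, p⁆, hb p, hb ⁅a, p⁆, ha p] }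
  have hS : S = ⊤ := D.gen S he hf
  have hx : x ∈ S := by rw [hS]; trivial
  exact hx u

lemma act_surj (hY : IsSimpleOrder (LieSubmodule ℂ L Y)) {κ : Module.Dual ℂ H} {y : Y}
    (hy : D.Sing κ y) (hy0 : y ≠ 0) : Function.Surjective (D.act y) := by
  let P : LieSubmodule ℂ L Y :=
    { LinearMap.range (D.act y) with
      lie_mem := fun {x m} hm => D.stable (LinearMap.range (D.act y))
        (by rintro i _ ⟨a, rfl⟩; exact ⟨_, (D.e_act_sing hy i a).symm⟩)
        (by rintro i _ ⟨a, rfl⟩; exact ⟨_, D.act_F y i a⟩) x m hm }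
  have hyP : y ∈ P := ⟨Finsupp.single [] 1, by simp [wact]⟩
  rcases hY.eq_bot_or_eq_top P with h | h
  · rw [h] at hyP
    exact absurd ((LieSubmodule.mem_bot y).1 hyP) hy0
  · intro z
    have : z ∈ P := by rw [h]; trivial
    exact this

lemma sl2 (i : Fin r) : IsSl2Triple (D.hc i : L) (D.e i) (D.f i) where
  h_ne_zero := fun h => by
    have h1 : D.hc i = 0 := by exact_mod_cast h
    have := D.two i
    rw [h1, map_zero] at this
    norm_num at this
  lie_e_f := by rw [D.hef, if_pos rfl]
  lie_h_e_nsmul := by rw [D.he, D.two, ← Nat.cast_smul_eq_nsmul ℂ]; norm_num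
  lie_h_f_nsmul := by rw [D.hf, D.two, ← Nat.cast_smul_eq_nsmul ℂ]; norm_num

lemma sing_nat [FiniteDimensional ℂ Y] {κ : Module.Dual ℂ H} {y : Y}
    (hy : D.Sing κ y) (hy0 : y ≠ 0) (i : Fin r) : ∃ n : ℕ, κ (D.hc i) = n := by
  have : (D.sl2 i).HasPrimitiveVectorWith y (κ (D.hc i)) := ⟨hy0, hy.2 _, hy.1 i⟩
  exact this.exists_nat

/-- Operators on words realising elements of the lower subalgebra. -/
lemma exists_Fop (z : L) (hz : z ∈ LieSubalgebra.lieSpan ℂ L (Set.range D.f)) :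
    ∃ T : A r →ₗ[ℂ] A r, ∀ (Y : Type) [AddCommGroup Y] [Module ℂ Y] [LieRingModule L Y]
      [LieModule ℂ L Y] (y : Y) (a : A r), D.act y (T a) = ⁅z, D.act y a⁆ := by
  induction hz using LieSubalgebra.lieSpan_induction with
  | mem x hx =>
    obtain ⟨i, rfl⟩ := hx
    exact ⟨F i, fun Y _ _ _ _ y a => D.act_F y i a⟩
  | zero => exact ⟨0, fun Y _ _ _ _ y a => by simp⟩
  | add x y _ _ hx hy =>
    obtain ⟨S, hS⟩ := hx
    obtain ⟨T, hT⟩ := hy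
    exact ⟨S + T, fun Y _ _ _ _ y a => by simp [hS, hT]⟩
  | smul c x _ hx =>
    obtain ⟨S, hS⟩ := hx
    exact ⟨c • S, fun Y _ _ _ _ y a => by simp [hS]⟩
  | lie x y _ _ hx hy =>
    obtain ⟨S, hS⟩ := hx
    obtain ⟨T, hT⟩ := hy
    exact ⟨S ∘ₗ T - T ∘ₗ S, fun Y _ _ _ _ y a => by
      simp only [LinearMap.sub_apply, map_sub, LinearMap.comp_apply, hS, hT, lie_lie]⟩

/-- Families of elements depending polynomially on a parameter. -/
noncomputable def Poly (r : ℕ) : Submodule ℂ (ℕ → A r) :=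
  Submodule.span ℂ {g | ∃ (j : ℕ) (p : A r), g = fun k : ℕ => (k : ℂ) ^ j • p}

lemma poly_const (p : A r) : (fun _ => p) ∈ Poly r :=
  Submodule.subset_span ⟨0, p, by simp⟩

lemma poly_map (T : A r →ₗ[ℂ] A r) {g : ℕ → A r} (hg : g ∈ Poly r) :
    (fun k => T (g k)) ∈ Poly r := by
  induction hg using Submodule.span_induction with
  | mem x hx =>
    obtain ⟨j, p, rfl⟩ := hx
    exact Submodule.subset_span ⟨j, T p, by simp⟩
  | zero => simp only [Pi.zero_apply, map_zero]; exact Submodule.zero_mem _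
  | add x y _ _ hx hy =>
    simp only [Pi.add_apply, map_add]; exact Submodule.add_mem _ hx hy
  | smul c x _ hx =>
    simp only [Pi.smul_apply, map_smul]; exact Submodule.smul_mem _ c hx

lemma poly_mul {g : ℕ → A r} (hg : g ∈ Poly r) : (fun k : ℕ => (k : ℂ) • g k) ∈ Poly r := by
  induction hg using Submodule.span_induction with
  | mem x hx =>
    obtain ⟨j, p, rfl⟩ := hx
    exact Submodule.subset_span ⟨j + 1, p, by simp [smul_smul, pow_succ']⟩
  | zero => simp only [Pi.zero_apply, smul_zero]; exact Submodule.zero_mem _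
  | add x y _ _ hx hy =>
    simp only [Pi.add_apply, smul_add]; exact Submodule.add_mem _ hx hy
  | smul c x _ hx =>
    have : (fun k : ℕ => (k : ℂ) • (c • x) k) = c • (fun k : ℕ => (k : ℂ) • x k) := by
      funext k; simp only [Pi.smul_apply]; rw [smul_comm]
    rw [this]; exact Submodule.smul_mem _ c hx

lemma poly_vanish {M : Type*} [AddCommGroup M] [Module ℂ M] (T : A r →ₗ[ℂ] M) {g : ℕ → A r}
    (hg : g ∈ Poly r) (m : ℕ) (h : ∀ k, m ≤ k → T (g k) = 0) (k : ℕ) : T (g k) = 0 := by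
  have key : ∀ φ : A r →ₗ[ℂ] ℂ, ∃ P : Polynomial ℂ, ∀ k : ℕ, φ (g k) = P.eval (k : ℂ) := by
    intro φ
    clear h
    induction hg using Submodule.span_induction with
    | mem x hx =>
      obtain ⟨j, p, rfl⟩ := hx
      exact ⟨Polynomial.C (φ p) * Polynomial.X ^ j, fun k => by
        simp only [map_smul, smul_eq_mul, Polynomial.eval_mul, Polynomial.eval_C,
          Polynomial.eval_pow, Polynomial.eval_X]
        ring⟩
    | zero => exact ⟨0, by simp⟩
    | add x y _ _ hx hy =>
      obtain ⟨P, hP⟩ := hx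
      obtain ⟨Q, hQ⟩ := hy
      exact ⟨P + Q, fun k => by simp [hP, hQ]⟩
    | smul c x _ hx =>
      obtain ⟨P, hP⟩ := hx
      exact ⟨Polynomial.C c * P, fun k => by simp [hP]⟩
  rw [← Module.forall_dual_apply_eq_zero_iff ℂ]
  intro ψ
  obtain ⟨P, hP⟩ := key (ψ ∘ₗ T)
  have hP0 : P = 0 := by
    apply Polynomial.eq_zero_of_infinite_isRoot
    have hinf : (Set.Ici m).Infinite := Set.Ici_infinite m
    refine (hinf.image (f := fun k : ℕ => (k : ℂ)) (fun a _ b _ hab => Nat.cast_injective hab)).mono ?_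
    rintro _ ⟨k, hk, rfl⟩
    show P.eval _ = 0
    rw [← hP, LinearMap.comp_apply, h k hk, map_zero]
  have := hP k
  rw [hP0] at this
  simpa using this

/-- Operators on words realising elements of the upper subalgebra on singular vectors. -/
lemma exists_Gop (μ : Module.Dual ℂ H) (z : L)
    (hz : z ∈ LieSubalgebra.lieSpan ℂ L (Set.range D.e)) :
    ∃ G : ℕ → A r →ₗ[ℂ] A r,
      (∀ k n, ∀ a ∈ Lt r n, G k a ∈ Lt r (n - 1)) ∧
      (∀ g ∈ Poly r, (fun k => G k (g k)) ∈ Poly r) ∧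
      ∀ (k : ℕ) (Y : Type) [AddCommGroup Y] [Module ℂ Y] [LieRingModule L Y]
      [LieModule ℂ L Y] (y : Y), D.Sing ((k : ℂ) • μ) y →
        ∀ (a : A r), ⁅z, D.act y a⁆ = D.act y (G k a) := by
  induction hz using LieSubalgebra.lieSpan_induction with
  | mem x hx =>
    obtain ⟨i, rfl⟩ := hx
    refine ⟨fun k => D.E ((k : ℂ) • μ) i, fun k n a ha => D.E_mem_Lt _ i ha, fun g hg => ?_,
      fun k Y _ _ _ _ y hy a => D.e_act_sing hy i a⟩
    have : (fun k : ℕ => D.E ((k : ℂ) • μ) i (g k)) =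
        (fun k => D.Ep i (g k)) + μ (D.hc i) • (fun k : ℕ => (k : ℂ) • Eh i (g k)) := by
      funext k
      simp [E, smul_smul, mul_comm]
    rw [this]
    exact Submodule.add_mem _ (poly_map _ hg) (Submodule.smul_mem _ _ (poly_mul (poly_map _ hg)))
  | zero => exact ⟨0, fun k n a _ => by simp, fun g hg => Submodule.zero_mem _,
      fun k Y _ _ _ _ y hy a => by simp⟩
  | add x y _ _ hx hy =>
    obtain ⟨S, hS1, hS2, hS⟩ := hx
    obtain ⟨T, hT1, hT2, hT⟩ := hy
    exact ⟨S + T, fun k n a ha => Submodule.add_mem _ (hS1 k n a ha) (hT1 k n a ha),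
      fun g hg => Submodule.add_mem _ (hS2 g hg) (hT2 g hg),
      fun k Y _ _ _ _ y hy a => by simp [hS k Y y hy, hT k Y y hy]⟩
  | smul c x _ hx =>
    obtain ⟨S, hS1, hS2, hS⟩ := hx
    exact ⟨c • S, fun k n a ha => Submodule.smul_mem _ c (hS1 k n a ha),
      fun g hg => Submodule.smul_mem _ c (hS2 g hg),
      fun k Y _ _ _ _ y hy a => by simp [hS k Y y hy]⟩
  | lie x y _ _ hx hy =>
    obtain ⟨S, hS1, hS2, hS⟩ := hx
    obtain ⟨T, hT1, hT2, hT⟩ := hy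
    exact ⟨fun k => S k ∘ₗ T k - T k ∘ₗ S k,
      fun k n a ha => Submodule.sub_mem _
        (Lt_mono (by omega) (hS1 k _ _ (hT1 k n a ha)))
        (Lt_mono (by omega) (hT1 k _ _ (hS1 k n a ha))),
      fun g hg => Submodule.sub_mem _ (hS2 _ (hT2 g hg)) (hT2 _ (hS2 g hg)),
      fun k Y _ _ _ _ y hy a => by
        simp only [LinearMap.sub_apply, map_sub, LinearMap.comp_apply, lie_lie,
          hS k Y y hy, hT k Y y hy]⟩

lemma d_sum_ne {n : Fin r → ℕ} (t : Fin r → ℝ) (ht : ∀ j, 0 < n j → 0 < t j)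
    (h : ∑ j, (n j : ℂ) * (D.d j : ℂ) * (t j : ℂ) = 0) : n = 0 := by
  have h1 : ∑ j, (n j : ℝ) * D.d j * t j = 0 := by exact_mod_cast h
  have h2 : ∀ j ∈ Finset.univ, 0 ≤ (n j : ℝ) * D.d j * t j := by
    intro j _
    rcases Nat.eq_zero_or_pos (n j) with hj | hj
    · simp [hj]
    · have := D.d_pos j
      have := ht j hj
      positivity
  funext j
  by_contra hj
  have hj : 0 < n j := Nat.pos_of_ne_zero hj
  have h3 := (Finset.sum_eq_zero_iff_of_nonneg h2).1 h1 j (Finset.mem_univ j)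
  have := D.d_pos j
  have := ht j hj
  have : 0 < (n j : ℝ) * D.d j * t j := by positivity
  linarith

lemma es_sing {κ : Module.Dual ℂ H} {y : Y} (hy : D.Sing κ y) (s : Fin D.N) : ⁅D.es s, y⁆ = 0 := by
  have := D.hes s
  generalize D.es s = x at this
  induction this using LieSubalgebra.lieSpan_induction with
  | mem x hx => obtain ⟨i, rfl⟩ := hx; exact hy.1 i
  | zero => simp
  | add x y _ _ hx hy => simp [hx, hy]
  | smul c x _ hx => simp [hx]
  | lie x y _ _ hx hy => simp [hx, hy]

/-- Highest weight modules: annihilators of the highest weight vector. -/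
lemma ker_le {W Z : Type} [AddCommGroup W] [Module ℂ W] [LieRingModule L W] [LieModule ℂ L W]
    [FiniteDimensional ℂ W]
    [AddCommGroup Z] [Module ℂ Z] [LieRingModule L Z] [LieModule ℂ L Z] [FiniteDimensional ℂ Z]
    {κ : Module.Dual ℂ H} {w : W} {z : Z} (hw : D.Sing κ w) (hz : D.Sing κ z) (hw0 : w ≠ 0)
    (m : ℕ) : ∀ a ∈ Lt r m, D.act w a = 0 → D.act z a = 0 := by
  induction m with
  | zero => intro a ha _; rw [Lt_zero ha, map_zero]
  | succ m ih =>
    intro a ha haw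
    refine D.act_eq_zero_of_hom fun n => ?_
    have hbw := D.act_hom_eq_zero hw.2 haw n
    have hbm := hom_mem_Lt n ha
    have hbh := isHom_hom n a
    generalize hom n a = b at hbw hbm hbh
    by_contra hne
    have hsing : D.Sing (κ - ∑ j, (n j : ℂ) • D.α j) (D.act z b) := by
      refine ⟨fun i => ?_, D.h_act_hom hz.2 hbh⟩
      rw [D.e_act_sing hz]
      refine ih _ (D.E_mem_Lt κ i hbm) ?_
      rw [← D.e_act_sing hw, hbw, lie_zero]
    have hpos := D.sing_nat hsing hne
    have hpos' := D.sing_nat hw hw0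
    obtain ⟨C, hC, hC'⟩ := D.cas Z
    have h1 : C (D.act z b) = D.c κ • D.act z b := by
      have h2 : C z = D.c κ • z := by
        rw [hC' κ z hz.2]
        simp [D.es_sing hz]
      have h3 : ∀ u : A r, C (D.act z u) = D.c κ • D.act z u := by
        intro u
        induction u using Finsupp.induction_linear with
        | zero => simp
        | add a b ha hb => simp [ha, hb]
        | single v c =>
          simp only [act_single, map_smul]
          rw [smul_comm]
          congr 1
          induction v with
          | nil => exact h2
          | cons i v ih => simp only [wact, hC, ih, lie_smul]
      exact h3 b
    have h2 : C (D.act z b) = D.c (κ - ∑ j, (n j : ℂ) • D.α j) • D.act z b := by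
      rw [hC' _ _ hsing.2]
      simp [D.es_sing hsing]
    rw [h1] at h2
    have h3 := smul_left_injective ℂ hne h2
    have h4 := D.c_sub κ n
    rw [h3, sub_self] at h4
    choose p hp using hpos
    choose q hq using hpos'
    have h5 : n = 0 := by
      apply D.d_sum_ne (fun j => (p j : ℝ) + q j + 2) (fun j _ => by positivity)
      rw [h4]
      refine Finset.sum_congr rfl fun j _ => ?_
      congr 1
      have := hp j
      rw [LinearMap.sub_apply, hq] at this
      rw [hq]
      simp only [Complex.ofReal_add, Complex.ofReal_natCast, Complex.ofReal_ofNat]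
      linear_combination -this
    subst h5
    rw [isHom_zero hbh] at hbw hne
    simp only [act_single, wact] at hbw hne
    rcases smul_eq_zero.1 hbw with h | h
    · rw [h, zero_smul] at hne; exact hne rfl
    · exact hw0 h

lemma thmB {W Z : Type} [AddCommGroup W] [Module ℂ W] [LieRingModule L W] [LieModule ℂ L W]
    [FiniteDimensional ℂ W]
    [AddCommGroup Z] [Module ℂ Z] [LieRingModule L Z] [LieModule ℂ L Z] [FiniteDimensional ℂ Z]
    (hW : IsSimpleOrder (LieSubmodule ℂ L W))
    {κ : Module.Dual ℂ H} {w : W} {z : Z} (hw : D.Sing κ w) (hz : D.Sing κ z) (hw0 : w ≠ 0) :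
    ∃ Φ : W →ₗ[ℂ] Z, (∀ (x : L) u, Φ ⁅x, u⁆ = ⁅x, Φ u⁆) ∧ Φ w = z := by
  have hker : LinearMap.ker (D.act w) ≤ LinearMap.ker (D.act z) := by
    intro a ha
    obtain ⟨n, hn⟩ := exists_mem_Lt a
    exact D.ker_le hw hz hw0 n a hn ha
  have hsurj := D.act_surj hW hw hw0
  obtain ⟨g, hg⟩ := LinearMap.exists_rightInverse_of_surjective (D.act w)
    (LinearMap.range_eq_top.2 hsurj)
  have hg' : ∀ u, D.act w (g u) = u := fun u => LinearMap.congr_fun hg u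
  have hΦ : ∀ a, D.act z (g (D.act w a)) = D.act z a := by
    intro a
    have : g (D.act w a) - a ∈ LinearMap.ker (D.act w) := by
      rw [LinearMap.mem_ker, map_sub, hg', sub_self]
    have := hker this
    rwa [LinearMap.mem_ker, map_sub, sub_eq_zero] at this
  refine ⟨D.act z ∘ₗ g, D.commutes _ ?_ ?_, ?_⟩
  · intro i u
    obtain ⟨a, rfl⟩ := hsurj u
    rw [D.e_act_sing hw]
    simp only [LinearMap.comp_apply, hΦ]
    rw [D.e_act_sing hz]
  · intro i u
    obtain ⟨a, rfl⟩ := hsurj u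
    rw [← D.act_F]
    simp only [LinearMap.comp_apply, hΦ]
    rw [D.act_F]
  · have := hΦ (Finsupp.single [] 1)
    simpa [wact] using this

end Dat

namespace Dat
variable {H : LieSubalgebra ℂ L} {r : ℕ} (D : Dat H r)
variable {Y : Type} [AddCommGroup Y] [Module ℂ Y] [LieRingModule L Y] [LieModule ℂ L Y]

lemma cas_act {κ : Module.Dual ℂ H} {y : Y} (hy : D.Sing κ y) (C : Y →ₗ[ℂ] Y)
    (hC : ∀ (x : L) y, C ⁅x, y⁆ = ⁅x, C y⁆)
    (hC' : ∀ (κ : Module.Dual ℂ H) (y : Y), (∀ x : H, ⁅(x : L), y⁆ = κ x • y) →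
        C y = D.c κ • y + ∑ s, ⁅D.fs s, ⁅D.es s, y⁆⁆) (u : A r) :
    C (D.act y u) = D.c κ • D.act y u := by
  have h2 : C y = D.c κ • y := by
    rw [hC' κ y hy.2]
    simp [D.es_sing hy]
  induction u using Finsupp.induction_linear with
  | zero => simp
  | add a b ha hb => simp [ha, hb]
  | single v c =>
    simp only [act_single, map_smul]
    rw [smul_comm]
    congr 1
    induction v with
    | nil => exact h2
    | cons i v ih => simp only [wact, hC, ih, lie_smul]

/-- Highest weight module data with a normalising functional. -/
structure IsHW (μ : Module.Dual ℂ H) (k : ℕ) (y : Y) (η : Y →ₗ[ℂ] ℂ) : Prop where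
  sing : D.Sing ((k : ℂ) • μ) y
  one : η y = 1
  van : ∀ i u, η ⁅D.f i, u⁆ = 0

lemma IsHW.eta_act {μ : Module.Dual ℂ H} {k : ℕ} {y : Y} {η : Y →ₗ[ℂ] ℂ}
    (h : D.IsHW μ k y η) (a : A r) : η (D.act y a) = a [] := by
  induction a using Finsupp.induction_linear with
  | zero => simp
  | add a b ha hb => simp [ha, hb]
  | single w c =>
    cases w with
    | nil => simp [wact, h.one]
    | cons i w => simp [wact, h.van]

lemma IsHW.tmul {μ : Module.Dual ℂ H} {k l : ℕ} {y : Y} {η : Y →ₗ[ℂ] ℂ}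
    {Z : Type} [AddCommGroup Z] [Module ℂ Z] [LieRingModule L Z] [LieModule ℂ L Z]
    {z : Z} {ζ : Z →ₗ[ℂ] ℂ}
    (h : D.IsHW μ k y η) (h' : D.IsHW μ l z ζ) :
    D.IsHW μ (k + l) (y ⊗ₜ[ℂ] z) (LinearMap.mul' ℂ ℂ ∘ₗ TensorProduct.map η ζ) where
  sing := by
    refine ⟨fun i => ?_, fun x => ?_⟩
    · rw [TensorProduct.LieModule.lie_tmul_right, h.sing.1, h'.sing.1]; simp
    · rw [TensorProduct.LieModule.lie_tmul_right, h.sing.2, h'.sing.2, TensorProduct.tmul_smul,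
        ← TensorProduct.smul_tmul', ← add_smul]
      simp [add_mul]
  one := by simp [h.one, h'.one]
  van := fun i u => by
    induction u using TensorProduct.induction_on with
    | zero => simp
    | tmul a b =>
      rw [TensorProduct.LieModule.lie_tmul_right]
      simp [h.van, h'.van]
    | add a b ha hb => rw [lie_add, map_add, ha, hb, add_zero]

/-- Contraction of the second factor. -/
noncomputable def contr (Y : Type) [AddCommGroup Y] [Module ℂ Y] {Z : Type} [AddCommGroup Z]
    [Module ℂ Z] (ζ : Z →ₗ[ℂ] ℂ) : Y ⊗[ℂ] Z →ₗ[ℂ] Y :=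
  (TensorProduct.rid ℂ Y).toLinearMap ∘ₗ LinearMap.lTensor Y ζ

lemma IsHW.contr_act {μ : Module.Dual ℂ H} {l : ℕ} (y : Y)
    {Z : Type} [AddCommGroup Z] [Module ℂ Z] [LieRingModule L Z] [LieModule ℂ L Z]
    {z : Z} {ζ : Z →ₗ[ℂ] ℂ} (h' : D.IsHW μ l z ζ) (a : A r) :
    contr Y ζ (D.act (y ⊗ₜ[ℂ] z) a) = D.act y a := by
  have key : ∀ i (t : Y ⊗[ℂ] Z), contr Y ζ ⁅D.f i, t⁆ = ⁅D.f i, contr Y ζ t⁆ := by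
    intro i t
    induction t using TensorProduct.induction_on with
    | zero => simp
    | tmul a b =>
      rw [TensorProduct.LieModule.lie_tmul_right]
      simp [contr, h'.van]
    | add a b ha hb => rw [lie_add, map_add, ha, hb, map_add, lie_add]
  induction a using Finsupp.induction_linear with
  | zero => simp
  | add a b ha hb => simp [ha, hb]
  | single w c =>
    simp only [act_single, map_smul]
    congr 1
    induction w with
    | nil => simp [wact, contr, h'.one]
    | cons i w ih => simp only [wact, key, ih]

/-- `a` kills all highest weight vectors of weight `k μ`. -/
def Kills (μ : Module.Dual ℂ H) (k : ℕ) (a : A r) : Prop :=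
  ∀ (Y : Type) [AddCommGroup Y] [Module ℂ Y] [LieRingModule L Y] [LieModule ℂ L Y]
    (y : Y) (η : Y →ₗ[ℂ] ℂ), D.IsHW μ k y η → D.act y a = 0

/-- Existence of a highest weight module of weight `k μ`. -/
def Ex (μ : Module.Dual ℂ H) (k : ℕ) : Prop :=
  ∃ (Y : Type) (_ : AddCommGroup Y) (_ : Module ℂ Y) (_ : LieRingModule L Y)
    (_ : LieModule ℂ L Y) (y : Y) (η : Y →ₗ[ℂ] ℂ), D.IsHW μ k y η

lemma ex_all {μ : Module.Dual ℂ H} {y : Y} {η : Y →ₗ[ℂ] ℂ} (h : D.IsHW μ 1 y η) (k : ℕ) :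
    D.Ex μ (k + 1) := by
  induction k with
  | zero => exact ⟨Y, _, _, _, inferInstance, y, η, h⟩
  | succ k ih =>
    obtain ⟨Z, i1, i2, i3, i4, z, ζ, hz⟩ := ih
    exact ⟨Z ⊗[ℂ] Y, _, _, _, inferInstance, _, _, IsHW.tmul D hz h⟩

lemma kills_of_poly {μ : Module.Dual ℂ H} (hex : ∀ k, D.Ex μ (k + 1)) {g : ℕ → A r}
    (hg : g ∈ Poly r) (h : ∀ k, D.Kills μ k (g k)) (k m : ℕ) : D.Kills μ m (g k) := by
  intro Y _ _ _ _ y η hy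
  refine poly_vanish (D.act y) hg (m + 1) (fun k hk => ?_) k
  obtain ⟨Z, i1, i2, i3, i4, z, ζ, hz⟩ := hex (k - m - 1)
  have h1 := IsHW.tmul D hy hz
  have h2 : m + (k - m - 1 + 1) = k := by omega
  rw [h2] at h1
  have h3 := h k _ _ _ h1
  rw [← IsHW.contr_act D y hz, h3, map_zero]

lemma kills_add {μ : Module.Dual ℂ H} {k : ℕ} {a b : A r} (ha : D.Kills μ k a)
    (hb : D.Kills μ k b) : D.Kills μ k (a + b) := by
  intro Y _ _ _ _ y η hy
  rw [map_add, ha Y y η hy, hb Y y η hy, add_zero]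

lemma kills_smul {μ : Module.Dual ℂ H} {k : ℕ} {a : A r} (c : ℂ) (ha : D.Kills μ k a) :
    D.Kills μ k (c • a) := by
  intro Y _ _ _ _ y η hy
  rw [map_smul, ha Y y η hy, smul_zero]

lemma kills_E {μ : Module.Dual ℂ H} (hex : ∀ k, D.Ex μ (k + 1)) {a : A r}
    (ha : ∀ k, D.Kills μ k a) (i : Fin r) (k m : ℕ) : D.Kills μ m (D.E ((k : ℂ) • μ) i a) := by
  refine D.kills_of_poly hex (g := fun k : ℕ => D.E ((k : ℂ) • μ) i a) ?_ ?_ k m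
  · have : (fun k : ℕ => D.E ((k : ℂ) • μ) i a) =
        (fun k => D.Ep i a) + μ (D.hc i) • (fun k : ℕ => (k : ℂ) • Eh i a) := by
      funext k
      simp [E, smul_smul, mul_comm]
    rw [this]
    exact Submodule.add_mem _ (poly_const _) (Submodule.smul_mem _ _ (poly_mul (poly_const _)))
  · intro k Y _ _ _ _ y η hy
    rw [← D.e_act_sing hy.sing, ha k Y y η hy, lie_zero]

lemma kills_Ep {μ : Module.Dual ℂ H} (hex : ∀ k, D.Ex μ (k + 1)) {a : A r}
    (ha : ∀ k, D.Kills μ k a) (i : Fin r) (m : ℕ) : D.Kills μ m (D.Ep i a) := by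
  have := D.kills_E hex ha i 0 m
  simpa [E] using this

lemma kills_Eh {μ : Module.Dual ℂ H} (hex : ∀ k, D.Ex μ (k + 1)) {a : A r}
    (ha : ∀ k, D.Kills μ k a) (i : Fin r) (hi : μ (D.hc i) ≠ 0) (m : ℕ) :
    D.Kills μ m (Eh i a) := by
  have h1 := D.kills_E hex ha i 1 m
  have h0 := D.kills_Ep hex ha i m
  have h2 := D.kills_smul (μ (D.hc i))⁻¹ (D.kills_add h1 (D.kills_smul (-1) h0))
  have : (μ (D.hc i))⁻¹ • ((D.E (((1 : ℕ) : ℂ) • μ) i) a + (-1 : ℂ) • (D.Ep i) a) = Eh i a := by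
    simp [E, smul_smul, hi]
  rwa [this] at h2

lemma act_of_kills {μ : Module.Dual ℂ H} (hex : ∀ k, D.Ex μ (k + 1))
    (hμ : ∀ i, μ (D.hc i) ≠ 0)
    (hlow : ∀ P : Submodule ℂ Y, (∀ y, (∀ i, ⁅D.f i, y⁆ = 0) → y ∈ P) →
      (∀ i, ∀ p ∈ P, ⁅D.e i, p⁆ ∈ P) → P = ⊤) (n : ℕ) :
    ∀ a ∈ Lt r n, (∀ k, D.Kills μ k a) → ∀ z : Y, D.act z a = 0 := by
  induction n with
  | zero => intro a ha _ z; rw [Lt_zero ha, map_zero]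
  | succ n ih =>
    intro a ha hk
    let P : Submodule ℂ Y :=
      { carrier := {z | D.act z a = 0}
        add_mem' := fun {u v} hu hv => by
          simp only [Set.mem_ofPred_eq] at *
          rw [act_add', hu, hv, add_zero]
        zero_mem' := D.act_zero' a
        smul_mem' := fun c u hu => by
          simp only [Set.mem_ofPred_eq] at *
          rw [act_smul, hu, smul_zero] }
    have hP : P = ⊤ := by
      apply hlow
      · intro y hy
        have h0 : a [] = 0 := by
          obtain ⟨Z, i1, i2, i3, i4, z, ζ, hz⟩ := hex 0
          rw [← IsHW.eta_act D hz, hk _ Z z ζ hz, map_zero]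
        have h1 : ∀ b : A r, D.act y b = b [] • y := by
          intro b
          induction b using Finsupp.induction_linear with
          | zero => simp
          | add a b ha hb => simp [ha, hb, add_smul]
          | single w c =>
            rw [act_single]
            cases w with
            | nil => simp [wact]
            | cons i w =>
              have : D.wact y (i :: w) = 0 := by
                induction w generalizing i with
                | nil => exact hy i
                | cons j w ih => rw [wact, ih, lie_zero]
              simp [this]
        show D.act y a = 0
        rw [h1, h0, zero_smul]
      · intro i p hp
        show D.act _ a = 0
        have h1 := D.e_act i p a
        have h2 : D.act p a = 0 := hp
        rw [h2, lie_zero, ih _ (D.Ep_mem_Lt i ha) (D.kills_Ep hex hk i),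
          ih _ (Eh_mem_Lt i ha) (D.kills_Eh hex hk i (hμ i))] at h1
        simpa using h1.symm
    intro z
    have : z ∈ P := by rw [hP]; trivial
    exact this

lemma thmA {V : Type} [AddCommGroup V] [Module ℂ V] [LieRingModule L V] [LieModule ℂ L V]
    {μ β : Module.Dual ℂ H} {v : V} {η : V →ₗ[ℂ] ℂ} (hv : D.IsHW μ 1 v η)
    (hμ : ∀ j, ∃ n : ℕ, 2 ≤ n ∧ μ (D.hc j) = n)
    (hμβ : ∀ j, ∃ n : ℕ, (μ + β) (D.hc j) = n)
    (hlow : ∀ P : Submodule ℂ Y, (∀ y, (∀ i, ⁅D.f i, y⁆ = 0) → y ∈ P) →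
      (∀ i, ∀ p ∈ P, ⁅D.e i, p⁆ ∈ P) → P = ⊤)
    (hwt : ∀ (χ : Module.Dual ℂ H) (y : Y), y ≠ 0 → (∀ x : H, ⁅(x : L), y⁆ = χ x • y) →
      ∀ j, ∃ t : ℤ, -3 ≤ t ∧ χ (D.hc j) = t)
    {x : Y} (hx : ∀ h : H, ⁅(h : L), x⁆ = (-β) h • x) (m : ℕ) :
    ∀ a ∈ Lt r m, D.act v a = 0 → D.act x a = 0 := by
  have hex := D.ex_all hv
  have hμ0 : ∀ i, μ (D.hc i) ≠ 0 := by
    intro i h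
    obtain ⟨n, hn, hn'⟩ := hμ i
    rw [h] at hn'
    have : (n : ℂ) = 0 := hn'.symm
    have : n = 0 := by exact_mod_cast this
    omega
  choose Fo hFo using fun s => D.exists_Fop (D.fs s) (D.hfs s)
  choose Go hGo1 hGo2 hGo3 using fun s => D.exists_Gop μ (D.es s) (D.hes s)
  have hv1 : D.Sing μ v := by simpa using hv.sing
  induction m with
  | zero => intro a ha _; rw [Lt_zero ha, map_zero]
  | succ m ih =>
    intro a ha hav
    refine D.act_eq_zero_of_hom fun n => ?_
    have hbv := D.act_hom_eq_zero hv1.2 hav n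
    have hbm := hom_mem_Lt n ha
    have hbh := isHom_hom n a
    generalize hom n a = b at hbv hbm hbh
    by_contra hne
    set γ : Module.Dual ℂ H := ∑ j, (n j : ℂ) • D.α j with hγ
    let g : ℕ → A r := fun k => (D.c ((k : ℂ) • μ) - D.c ((k : ℂ) • μ - γ)) • b
      - ∑ s, Fo s (Go s k b)
    have hg : g ∈ Poly r := by
      refine Submodule.sub_mem _ (x := fun k : ℕ =>
        (D.c ((k : ℂ) • μ) - D.c ((k : ℂ) • μ - γ)) • b)
        (y := fun k : ℕ => ∑ s, Fo s (Go s k b)) ?_ ?_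
      · have : (fun k : ℕ => (D.c ((k : ℂ) • μ) - D.c ((k : ℂ) • μ - γ)) • b) =
            (∑ j, (n j : ℂ) * (D.d j : ℂ) * (2 * μ (D.hc j))) • (fun k : ℕ => (k : ℂ) • b) +
            (∑ j, (n j : ℂ) * (D.d j : ℂ) * (-γ (D.hc j) + 2)) • (fun k : ℕ => b) := by
          funext k
          rw [hγ, D.c_sub]
          simp only [Pi.add_apply, Pi.smul_apply, smul_smul, ← add_smul]
          congr 1
          rw [Finset.sum_mul, ← Finset.sum_add_distrib]
          refine Finset.sum_congr rfl fun j _ => ?_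
          simp only [LinearMap.smul_apply, smul_eq_mul]
          ring
        rw [this]
        exact Submodule.add_mem _ (Submodule.smul_mem _ _ (poly_mul (poly_const b)))
          (Submodule.smul_mem _ _ (poly_const b))
      · have : (fun k : ℕ => ∑ s, Fo s (Go s k b)) = ∑ s, (fun k : ℕ => Fo s (Go s k b)) := by
          funext k; simp
        rw [this]
        exact Submodule.sum_mem _ fun s _ => poly_map _ (hGo2 s _ (poly_const b))
    have hk : ∀ k, D.Kills μ k (g k) := by
      intro k Z _ _ _ _ z ζ hz
      obtain ⟨C, hC, hC'⟩ := D.cas Z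
      have h1 := D.cas_act hz.sing C hC hC' b
      rw [hC' _ _ (D.h_act_hom hz.sing.2 hbh)] at h1
      simp only [g, map_sub, map_smul, map_sum, hFo]
      rw [sub_smul, ← h1, hγ, add_sub_cancel_left, sub_eq_zero]
      exact Finset.sum_congr rfl fun s _ => by rw [hGo3 s k Z z hz.sing b]
    have hN : ∀ k, D.Kills μ k (g 1) := D.kills_of_poly hex hg hk 1
    obtain ⟨p, hp⟩ := exists_mem_Lt (g 1)
    have h1 := D.act_of_kills (Y := Y) hex hμ0 hlow p (g 1) hp hN x
    simp only [g, map_sub, map_smul, map_sum, hFo, Nat.cast_one, one_smul] at h1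
    have h2 : ∀ s, D.act x (Go s 1 b) = 0 := by
      intro s
      refine ih _ (hGo1 s 1 _ b hbm) ?_
      rw [← hGo3 s 1 V v hv.sing, hbv, lie_zero]
    simp only [h2, lie_zero, Finset.sum_const_zero, sub_zero] at h1
    have h3 := (smul_eq_zero.1 h1).resolve_right hne
    rw [hγ, D.c_sub] at h3
    have hw := hwt _ _ hne (D.h_act_hom hx hbh)
    choose t ht ht' using hw
    choose q hq hq' using hμ
    choose u hu using hμβ
    have h5 : n = 0 := by
      apply D.d_sum_ne (fun j => (q j : ℝ) + u j + t j + 2) (fun j _ => by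
        have h6 : (2 : ℝ) ≤ q j := by exact_mod_cast hq j
        have h7 : (-3 : ℝ) ≤ t j := by exact_mod_cast ht j
        have h8 : (0 : ℝ) ≤ u j := by positivity
        linarith)
      rw [← h3]
      refine Finset.sum_congr rfl fun j _ => ?_
      congr 1
      have e1 := ht' j
      have e2 := hu j
      rw [LinearMap.sub_apply, LinearMap.neg_apply] at e1
      rw [LinearMap.add_apply, hq' j] at e2
      rw [hq' j]
      simp only [Complex.ofReal_add, Complex.ofReal_natCast, Complex.ofReal_ofNat,
        Complex.ofReal_intCast]
      linear_combination -e1 - e2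
    subst h5
    rw [isHom_zero hbh] at hbv hne
    simp only [act_single, wact] at hbv hne
    rcases smul_eq_zero.1 hbv with h | h
    · rw [h, zero_smul] at hne; exact hne rfl
    · have := hv.one
      rw [h, map_zero] at this
      exact zero_ne_one this

end Dat

section Roots
variable [FiniteDimensional ℂ L] [LieAlgebra.IsSemisimple ℂ L]
variable {H : LieSubalgebra ℂ L} [H.IsCartanSubalgebra]

lemma mem_rs {χ : Module.Dual ℂ H} {x : L} :
    x ∈ rootSpace H ⇑χ ↔ ∀ h : H, ⁅(h : L), x⁆ = χ h • x := by
  constructor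
  · intro hx h
    exact IsKilling.lie_eq_smul_of_mem_rootSpace hx h
  · intro hx
    rw [rootSpace, mem_genWeightSpace]
    intro h
    refine ⟨1, ?_⟩
    have : ⁅h, x⁆ = χ h • x := hx h
    simp [this]

/-- The weight attached to a functional with nonzero root space. -/
def toW (χ : Module.Dual ℂ H) (h : rootSpace H ⇑χ ≠ ⊥) : Weight ℂ H L := ⟨χ, h⟩

lemma IsRoot.exists_weight {χ : Module.Dual ℂ H} (h : IsRoot H χ) :
    ∃ w : Weight ℂ H L, w.IsNonZero ∧ w.toLinear = χ := by
  refine ⟨toW χ h.2, fun h0 => h.1 ?_, ?_⟩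
  · ext x
    exact congrFun h0 x
  · ext x; rfl

lemma isRoot_weight {w : Weight ℂ H L} (h : w.IsNonZero) : IsRoot H w.toLinear := by
  refine ⟨fun h0 => h ?_, w.genWeightSpace_ne_bot⟩
  exact Weight.coe_toLinear_eq_zero_iff.1 h0

/-- invariance -/
lemma kf_inv (x y z : L) : killingForm ℂ L ⁅x, y⁆ z = - killingForm ℂ L y ⁅x, z⁆ := by
  have := LieModule.traceForm_apply_lie_apply ℂ L L y x z
  rw [killingForm, ← this, ← lie_skew, map_neg, LinearMap.neg_apply]

lemma kf_symm (x y : L) : killingForm ℂ L x y = killingForm ℂ L y x :=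
  LieModule.traceForm_comm ℂ L L x y

lemma kf_nd : (killingForm ℂ L).Nondegenerate := IsKilling.killingForm_nondegenerate ℂ L

/-- The Casimir operator commutes with the action. -/
lemma casimir_comm {ι : Type*} [Fintype ι] (b b' : Basis ι ℂ L)
    (hb : ∀ i z, b'.repr z i = killingForm ℂ L z (b i))
    (hb' : ∀ i z, b.repr z i = killingForm ℂ L z (b' i))
    (Y : Type) [AddCommGroup Y] [Module ℂ Y] [LieRingModule L Y] [LieModule ℂ L Y] (x : L) (y : Y) :
    ∑ i, ⁅b i, ⁅b' i, ⁅x, y⁆⁆⁆ = ⁅x, ∑ i, ⁅b i, ⁅b' i, y⁆⁆⁆ := by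
  have e1 : ∀ i, ⁅x, b i⁆ = ∑ j, killingForm ℂ L ⁅x, b i⁆ (b' j) • b j := by
    intro i
    conv_lhs => rw [← b.sum_repr ⁅x, b i⁆]
    exact Finset.sum_congr rfl fun j _ => by rw [hb']
  have e2 : ∀ i, ⁅x, b' i⁆ = ∑ j, (-killingForm ℂ L ⁅x, b j⁆ (b' i)) • b' j := by
    intro i
    conv_lhs => rw [← b'.sum_repr ⁅x, b' i⁆]
    refine Finset.sum_congr rfl fun j _ => ?_
    rw [hb, kf_inv, kf_symm]
  rw [lie_sum, ← sub_eq_zero, ← Finset.sum_sub_distrib]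
  have e3 : ∀ i, ⁅b i, ⁅b' i, ⁅x, y⁆⁆⁆ - ⁅x, ⁅b i, ⁅b' i, y⁆⁆⁆ =
      -(⁅⁅x, b i⁆, ⁅b' i, y⁆⁆ + ⁅b i, ⁅⁅x, b' i⁆, y⁆⁆) := by
    intro i
    rw [leibniz_lie x (b i), leibniz_lie x (b' i), lie_add]
    abel
  simp only [e3]
  rw [Finset.sum_neg_distrib, Finset.sum_add_distrib]
  have e4 : ∑ i, ⁅⁅x, b i⁆, ⁅b' i, y⁆⁆ =
      ∑ i, ∑ j, killingForm ℂ L ⁅x, b i⁆ (b' j) • ⁅b j, ⁅b' i, y⁆⁆ := by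
    refine Finset.sum_congr rfl fun i _ => ?_
    rw [e1, sum_lie]
    refine Finset.sum_congr rfl fun j _ => ?_
    rw [smul_lie, ← e1]
  have e5 : ∑ i, ⁅b i, ⁅⁅x, b' i⁆, y⁆⁆ =
      ∑ i, ∑ j, -(killingForm ℂ L ⁅x, b j⁆ (b' i) • ⁅b i, ⁅b' j, y⁆⁆) := by
    refine Finset.sum_congr rfl fun i _ => ?_
    rw [e2, sum_lie, lie_sum]
    refine Finset.sum_congr rfl fun j _ => ?_
    rw [smul_lie, lie_smul, neg_smul]
  rw [e4, e5, Finset.sum_comm, neg_eq_zero, ← Finset.sum_add_distrib]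
  refine Finset.sum_eq_zero fun i _ => ?_
  rw [← Finset.sum_add_distrib]
  exact Finset.sum_eq_zero fun j _ => add_neg_cancel _

/-- The element of `H` dual to a functional. -/
noncomputable def tt (χ : Module.Dual ℂ H) : H := (IsKilling.cartanEquivDual H).symm χ

lemma tt_spec (χ : Module.Dual ℂ H) (h : H) : killingForm ℂ L (tt χ : L) (h : L) = χ h := by
  have : IsKilling.cartanEquivDual H (tt χ) = χ := LinearEquiv.apply_symm_apply _ _
  have h2 := LinearMap.congr_fun this h
  rw [← h2]
  rfl

lemma tt_symm (χ ψ : Module.Dual ℂ H) : χ (tt ψ) = ψ (tt χ) := by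
  rw [← tt_spec, ← tt_spec, kf_symm]

lemma tt_add (χ ψ : Module.Dual ℂ H) : tt (χ + ψ) = tt χ + tt ψ := map_add _ _ _
lemma tt_smul (c : ℂ) (χ : Module.Dual ℂ H) : tt (c • χ) = c • tt χ := map_smul _ _ _

/-- A weight basis. -/
lemma exists_weight_basis : ∃ (ι : Type) (_ : Fintype ι) (w : ι → Weight ℂ H L) (b : Basis ι ℂ L),
    (∀ i, b i ∈ rootSpace H (w i)) ∧ ∀ g : Weight ℂ H L → ℂ,
      (∀ χ, χ.IsZero → g χ = 0) → ∑ i, g (w i) = ∑ χ, g χ := by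
  have hinternal : DirectSum.IsInternal (fun χ : Weight ℂ H L => (rootSpace H χ).toSubmodule) :=
    DirectSum.isInternal_submodule_of_iSupIndep_of_iSup_eq_top
      (LieSubmodule.iSupIndep_toSubmodule.mpr <| iSupIndep_genWeightSpace' ℂ H L)
      (LieSubmodule.iSup_toSubmodule_eq_top.mpr <| iSup_genWeightSpace_eq_top' ℂ H L)
  let v : ∀ χ : Weight ℂ H L, Basis (Fin (finrank ℂ (rootSpace H χ).toSubmodule)) ℂ
    (rootSpace H χ).toSubmodule := fun χ => finBasis ℂ _
  refine ⟨(Σ χ : Weight ℂ H L, Fin (finrank ℂ (rootSpace H χ).toSubmodule)), inferInstance,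
    Sigma.fst, hinternal.collectedBasis v, fun i => hinternal.collectedBasis_mem v i, ?_⟩
  intro g hg
  rw [Fintype.sum_sigma]
  refine Finset.sum_congr rfl fun χ _ => ?_
  simp only [Finset.sum_const, Finset.card_univ, Fintype.card_fin]
  by_cases h : χ.IsZero
  · rw [hg χ h, smul_zero]
  · have := IsKilling.finrank_rootSpace_eq_one χ h
    change finrank ℂ (rootSpace H χ).toSubmodule = 1 at this
    rw [this, one_smul]

end Roots

section Roots2
variable [FiniteDimensional ℂ L] [LieAlgebra.IsSemisimple ℂ L]
variable {H : LieSubalgebra ℂ L} [H.IsCartanSubalgebra]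

lemma rs_lie {χ ψ : Module.Dual ℂ H} {x y : L} (hx : x ∈ rootSpace H ⇑χ) (hy : y ∈ rootSpace H ⇑ψ) :
    ⁅x, y⁆ ∈ rootSpace H ⇑(χ + ψ) := by
  rw [mem_rs] at *
  intro h
  rw [leibniz_lie, hx, hy, smul_lie, lie_smul, LinearMap.add_apply, add_smul]

lemma rs_zero {x : L} (hx : x ∈ rootSpace H ⇑(0 : Module.Dual ℂ H)) : x ∈ H := by
  have h2 : x ∈ rootSpace H (0 : H → ℂ) := hx
  rw [rootSpace_zero_eq] at h2
  exact h2

lemma rs_root {χ : Module.Dual ℂ H} {x : L} (hx : x ∈ rootSpace H ⇑χ) (h0 : x ≠ 0) :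
    χ = 0 ∨ IsRoot H χ := by
  by_cases h : χ = 0
  · exact Or.inl h
  · refine Or.inr ⟨h, fun hb => h0 ?_⟩
    rw [hb] at hx
    simpa using hx

lemma IsRoot.exists_ne {χ : Module.Dual ℂ H} (h : IsRoot H χ) : ∃ x ∈ rootSpace H ⇑χ, x ≠ 0 := by
  by_contra! hc
  apply h.2
  rw [eq_bot_iff]
  intro x hx
  simpa using hc x hx

lemma exists_pair {χ : Module.Dual ℂ H} {x : L} (hx : x ∈ rootSpace H ⇑χ) (h0 : x ≠ 0) :
    ∃ y ∈ rootSpace H ⇑(-χ), killingForm ℂ L x y ≠ 0 := by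
  by_contra! hc
  have := LieAlgebra.mem_ker_killingForm_of_mem_rootSpace_of_forall_rootSpace_neg ℂ L H hx
    (fun y hy => hc y hy)
  rw [IsKilling.ker_killingForm_eq_bot] at this
  exact h0 (by simpa using this)

lemma kf_zero {χ ψ : Module.Dual ℂ H} {x y : L} (hx : x ∈ rootSpace H ⇑χ) (hy : y ∈ rootSpace H ⇑ψ)
    (h : χ + ψ ≠ 0) : killingForm ℂ L x y = 0 := by
  refine killingForm_apply_eq_zero_of_mem_rootSpace_of_add_ne_zero ℂ L H hx hy fun h0 => h ?_
  ext t
  exact congrFun h0 t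

lemma IsRoot.neg' {χ : Module.Dual ℂ H} (h : IsRoot H χ) : IsRoot H (-χ) := by
  obtain ⟨x, hx, h0⟩ := h.exists_ne
  obtain ⟨y, hy, hxy⟩ := exists_pair hx h0
  rcases rs_root hy (by rintro rfl; simp at hxy) with h1 | h1
  · exact absurd (neg_eq_zero.1 h1) h.1
  · exact h1

lemma dim1 {χ : Module.Dual ℂ H} (h : IsRoot H χ) {x y : L} (hx : x ∈ rootSpace H ⇑χ)
    (h0 : x ≠ 0) (hy : y ∈ rootSpace H ⇑χ) : ∃ c : ℂ, y = c • x := by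
  obtain ⟨w, hw, rfl⟩ := h.exists_weight
  have h1 := IsKilling.finrank_rootSpace_eq_one w hw
  obtain ⟨c, hc⟩ := exists_smul_eq_of_finrank_eq_one h1 (x := ⟨x, hx⟩)
    (fun h2 => h0 (congrArg Subtype.val h2)) ⟨y, hy⟩
  exact ⟨c, (congrArg Subtype.val hc).symm⟩

lemma root_coroot_bound {w χ : Weight ℂ H L} (hw : w.IsNonZero) :
    ∃ t : ℤ, -3 ≤ t ∧ t ≤ 3 ∧ χ (IsKilling.coroot w) = t := by
  by_cases hχ : χ.IsZero
  · refine ⟨0, by norm_num, by norm_num, ?_⟩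
    have : (χ : H → ℂ) = 0 := hχ
    simp [this]
  · let i : H.root := ⟨χ, by simpa using hχ⟩
    let j : H.root := ⟨w, by simpa using hw⟩
    have h1 := RootPairing.pairingIn_pairingIn_mem_set_of_isCrystal_of_isRed
      (IsKilling.rootSystem H) i j
    have h2 := RootPairing.algebraMap_pairingIn (IsKilling.rootSystem H) ℤ i j
    have h3 := IsKilling.rootSystem_pairing_apply H j i
    refine ⟨(IsKilling.rootSystem H).pairingIn ℤ i j, ?_, ?_, ?_⟩
    · simp only [Set.mem_insert_iff, Set.mem_singleton_iff, Prod.mk.injEq] at h1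
      omega
    · simp only [Set.mem_insert_iff, Set.mem_singleton_iff, Prod.mk.injEq] at h1
      omega
    · exact h3.symm.trans (h2.symm.trans (by simp))

lemma norm_pos' {w : Weight ℂ H L} (hw : w.IsNonZero) :
    ∃ d : ℝ, 0 < d ∧ tt w.toLinear = (d : ℂ) • IsKilling.coroot w := by
  set q := w (tt w.toLinear) with hq
  have hcr : IsKilling.coroot w = (2 * q⁻¹) • tt w.toLinear := by
    rw [mul_smul, ofNat_smul_eq_nsmul]
    rfl
  have h2 := IsKilling.root_apply_coroot hw
  have hq0 : q ≠ 0 := by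
    intro h
    rw [hcr, h] at h2
    simp at h2
  -- `K(coroot, coroot)`
  have hK : killingForm ℂ L (IsKilling.coroot w : L) (IsKilling.coroot w : L) = 4 * q⁻¹ := by
    conv_lhs => rw [hcr]
    have h3 := tt_spec w.toLinear ((2 * q⁻¹) • tt w.toLinear)
    have h4 : (Weight.toLinear ℂ H L w) (tt w.toLinear) = q := rfl
    have h5 : (((2 * q⁻¹) • tt w.toLinear : H) : L) = (2 * q⁻¹) • (tt w.toLinear : L) := rfl
    rw [h5] at h3 ⊢
    rw [map_smul (killingForm ℂ L), LinearMap.smul_apply, h3, map_smul, h4, smul_eq_mul, smul_eq_mul]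
    field_simp
    norm_num
  have hsum := LinearMap.congr_fun₂ (IsKilling.restrict_killingForm_eq_sum (K := ℂ) (L := L) (H := H))
    (IsKilling.coroot w) (IsKilling.coroot w)
  have hsum' : killingForm ℂ L (IsKilling.coroot w : L) (IsKilling.coroot w : L) =
      ∑ χ ∈ H.root, χ (IsKilling.coroot w) * χ (IsKilling.coroot w) := by
    refine Eq.trans ?_ (hsum.trans ?_)
    · rfl
    · simp [LinearMap.sum_apply]
      rfl
  choose t ht1 ht2 ht using fun χ : Weight ℂ H L => root_coroot_bound (χ := χ) hw
  have hpos : 0 < ∑ χ ∈ H.root, t χ * t χ := by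
    refine Finset.sum_pos' (fun χ _ => mul_self_nonneg _) ⟨w, by simpa using hw, ?_⟩
    have : t w = 2 := by
      have := (ht w).symm.trans h2
      exact_mod_cast this
    rw [this]; norm_num
  set S := ∑ χ ∈ H.root, t χ * t χ with hS
  have hKS : 4 * q⁻¹ = (S : ℂ) := by
    rw [← hK, hsum', hS]
    push_cast
    exact Finset.sum_congr rfl fun χ _ => by rw [ht]
  have hq' : q = 4 / (S : ℂ) := by
    rw [← hKS]; field_simp
  refine ⟨2 / S, by positivity, ?_⟩
  rw [hcr, smul_smul, hq']
  have hS0 : (S : ℂ) ≠ 0 := by exact_mod_cast hpos.ne'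
  have : ((2 / (S : ℝ) : ℝ) : ℂ) * (2 * (4 / (S : ℂ))⁻¹) = 1 := by
    simp only [Complex.ofReal_div, Complex.ofReal_ofNat, Complex.ofReal_intCast]
    field_simp
    norm_num
  rw [this, one_smul]

/-- Root data with chosen simple root vectors. -/
structure Chev (H : LieSubalgebra ℂ L) [H.IsCartanSubalgebra] {r : ℕ} (α : Fin r → Module.Dual ℂ H)
    (hc : Fin r → H) (e f : Fin r → L) : Prop where
  base : IsBase H α
  two : ∀ j, α j (hc j) = 2
  e_mem : ∀ j, e j ∈ rootSpace H ⇑(α j)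
  f_mem : ∀ j, f j ∈ rootSpace H ⇑(-α j)
  lie : ∀ j, ⁅e j, f j⁆ = (hc j : L)

lemma exists_chev {r : ℕ} {α : Fin r → Module.Dual ℂ H} {hc : Fin r → H}
    (hbase : IsBase H α) (hcoroot : ∀ j, IsCoroot H (α j) (hc j)) :
    ∃ e f : Fin r → L, Chev H α hc e f := by
  choose h2 e he f hf hl using hcoroot
  exact ⟨e, f, hbase, h2, he, hf, fun j => (hl j).symm⟩

namespace Chev
variable {r : ℕ} {α : Fin r → Module.Dual ℂ H} {hc : Fin r → H} {e f : Fin r → L}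

lemma neg (C : Chev H α hc e f) : Chev H (-α) (-hc) f e where
  base := {
    isRoot := fun j => (C.base.isRoot j).neg'
    indep := by
      refine LinearIndependent.of_comp (-LinearMap.id) ?_
      convert C.base.indep using 1
      ext j : 1
      simp
    pos_neg := fun χ h => by
      rcases C.base.pos_neg χ h with ⟨c, hc⟩ | ⟨c, hc⟩
      · exact Or.inr ⟨c, by simp [hc]⟩
      · exact Or.inl ⟨c, by simp [hc]⟩ }
  two := fun j => by simp [C.two]
  e_mem := C.f_mem
  f_mem := fun j => by simpa using C.e_mem j
  lie := fun j => by
    rw [← lie_skew, C.lie]; simp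

lemma weight (C : Chev H α hc e f) (j : Fin r) : ∃ w : Weight ℂ H L, w.IsNonZero ∧ w.toLinear = α j ∧
    hc j = IsKilling.coroot w := by
  obtain ⟨w, hw, hwj⟩ := (C.base.isRoot j).exists_weight
  refine ⟨w, hw, hwj, ?_⟩
  refine IsKilling.eq_coroot_of_mem_corootSpace_of_two w ?_ ?_
  · rw [mem_corootSpace]
    apply Submodule.subset_span
    have hwj' : (w : H → ℂ) = ⇑(α j) := by rw [← hwj]; rfl
    refine ⟨e j, by rw [hwj']; exact C.e_mem j, f j, ?_, C.lie j⟩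
    rw [hwj']
    exact C.f_mem j
  · have := C.two j
    rw [← hwj] at this
    exact this

lemma bound (C : Chev H α hc e f) {χ : Module.Dual ℂ H} {x : L} (hx : x ∈ rootSpace H ⇑χ)
    (h0 : x ≠ 0) (j : Fin r) : ∃ t : ℤ, -3 ≤ t ∧ χ (hc j) = t := by
  obtain ⟨w, hw, hwj, hcj⟩ := C.weight j
  have hne : rootSpace H ⇑χ ≠ ⊥ := by
    intro hb
    rw [hb] at hx
    exact h0 (by simpa using hx)
  obtain ⟨t, h1, h2, h3⟩ := root_coroot_bound (χ := toW χ hne) hw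
  refine ⟨t, h1, ?_⟩
  rw [hcj]
  exact h3

lemma dpos (C : Chev H α hc e f) (j : Fin r) : ∃ d : ℝ, 0 < d ∧ tt (α j) = (d : ℂ) • hc j := by
  obtain ⟨w, hw, hwj, hcj⟩ := C.weight j
  rw [hcj, ← hwj]
  exact norm_pos' hw

lemma root_norm {χ : Module.Dual ℂ H} (h : IsRoot H χ) : ∃ d : ℝ, 0 < d ∧ χ (tt χ) = d := by
  obtain ⟨w, hw, rfl⟩ := h.exists_weight
  obtain ⟨d, hd, h1⟩ := norm_pos' hw
  refine ⟨d * 2, by positivity, ?_⟩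
  rw [h1, map_smul]
  have := IsKilling.root_apply_coroot hw
  rw [Weight.toLinear_apply, this]
  simp

lemma coef_eq (C : Chev H α hc e f) {c c' : Fin r → ℂ} (h : ∑ j, c j • α j = ∑ j, c' j • α j) :
    c = c' := by
  have := Fintype.linearIndependent_iff.1 C.base.indep (c - c') (by
    simp [sub_smul, h])
  ext j
  exact sub_eq_zero.1 (this j)

/-- A root with mixed-sign coefficients does not exist. -/
lemma sign (C : Chev H α hc e f) {χ : Module.Dual ℂ H} (h : IsRoot H χ) {c : Fin r → ℤ}
    (hcc : χ = ∑ j, (c j : ℂ) • α j) : (∀ j, 0 ≤ c j) ∨ (∀ j, c j ≤ 0) := by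
  rcases C.base.pos_neg χ h with ⟨n, hn⟩ | ⟨n, hn⟩
  · left
    intro j
    have := congrFun (C.coef_eq (hcc.symm.trans hn)) j
    have h2 : c j = n j := by exact_mod_cast this
    omega
  · right
    intro j
    have h3 : χ = ∑ j, (-(n j : ℂ)) • α j := by rw [hn]; simp
    have := congrFun (C.coef_eq (hcc.symm.trans h3)) j
    have h2 : c j = -n j := by exact_mod_cast this
    omega

lemma single_eq (i : Fin r) : α i = ∑ j, ((if j = i then (1:ℤ) else 0 : ℤ) : ℂ) • α j := by
  rw [Finset.sum_eq_single i]
  · simp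
  · intro j _ hj; simp [hj]
  · simp

lemma ef_zero (C : Chev H α hc e f) {i j : Fin r} (hij : i ≠ j) : ⁅e i, f j⁆ = 0 := by
  by_contra h0
  have hm := rs_lie (C.e_mem i) (C.f_mem j)
  rcases rs_root hm h0 with h | h
  · have : α i = α j := by rwa [← sub_eq_add_neg, sub_eq_zero] at h
    exact hij (C.base.indep.injective this)
  · have hs := C.sign h (c := fun k => (if k = i then 1 else 0) - (if k = j then 1 else 0)) (by
      conv_lhs => rw [single_eq (α := α) i, single_eq (α := α) j]
      rw [← sub_eq_add_neg, ← Finset.sum_sub_distrib]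
      refine Finset.sum_congr rfl fun k _ => ?_
      rw [← sub_smul]
      push_cast
      rfl)
    rcases hs with hs | hs
    · have := hs j
      simp [hij.symm] at this
    · have := hs i
      simp [hij] at this

end Chev
end Roots2

section Roots3
variable [FiniteDimensional ℂ L] [LieAlgebra.IsSemisimple ℂ L]
variable {H : LieSubalgebra ℂ L} [H.IsCartanSubalgebra]
namespace Chev
variable {r : ℕ} {α : Fin r → Module.Dual ℂ H} {hc : Fin r → H} {e f : Fin r → L}

lemma hc_ne (C : Chev H α hc e f) (j : Fin r) : (hc j : L) ≠ 0 := by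
  intro h
  have h1 : hc j = 0 := Subtype.ext h
  have := C.two j
  rw [h1] at this
  simp at this

lemma e_ne (C : Chev H α hc e f) (j : Fin r) : e j ≠ 0 := by
  intro h
  apply C.hc_ne j
  rw [← C.lie, h, zero_lie]

lemma sl2 (C : Chev H α hc e f) (j : Fin r) : IsSl2Triple (hc j : L) (e j) (f j) where
  h_ne_zero := C.hc_ne j
  lie_e_f := C.lie j
  lie_h_e_nsmul := by
    rw [mem_rs.1 (C.e_mem j), C.two]
    exact ofNat_smul_eq_nsmul ℂ 2 _
  lie_h_f_nsmul := by
    rw [mem_rs.1 (C.f_mem j), LinearMap.neg_apply, C.two, neg_smul]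
    rw [ofNat_smul_eq_nsmul ℂ 2 (f j)]

lemma pos_pair (C : Chev H α hc e f) {χ : Module.Dual ℂ H} (hχ : IsRoot H χ) {c : Fin r → ℕ}
    (hcc : χ = ∑ j, (c j : ℂ) • α j) : ∃ j, 1 ≤ c j ∧ ∃ t : ℤ, 0 < t ∧ χ (hc j) = t := by
  by_contra! hcon
  obtain ⟨x, hx, h0⟩ := hχ.exists_ne
  choose t ht1 ht using fun j => C.bound hx h0 j
  choose d hd hdt using fun j => C.dpos j
  obtain ⟨D, hD, hDt⟩ := root_norm hχ
  have h1 : χ (tt χ) = ∑ j, (c j : ℂ) * ((d j : ℂ) * (t j : ℂ)) := by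
    rw [tt_symm]
    conv_lhs => rw [hcc]
    rw [LinearMap.sum_apply]
    refine Finset.sum_congr rfl fun j _ => ?_
    rw [← hcc, LinearMap.smul_apply, tt_symm, hdt, map_smul, ht, smul_eq_mul, smul_eq_mul]
  have h2 : D = ∑ j, (c j : ℝ) * (d j * (t j : ℝ)) := by
    have := hDt.symm.trans h1
    exact_mod_cast this
  have h3 : ∑ j, (c j : ℝ) * (d j * (t j : ℝ)) ≤ 0 := by
    refine Finset.sum_nonpos fun j _ => ?_
    by_cases hj : c j = 0
    · simp [hj]
    · have h4 : t j ≤ 0 := by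
        by_contra! h5
        exact hcon j (by omega) (t j) h5 (ht j)
      have h5 : (t j : ℝ) ≤ 0 := by exact_mod_cast h4
      have := (hd j).le
      exact mul_nonpos_of_nonneg_of_nonpos (by positivity) (mul_nonpos_of_nonneg_of_nonpos this h5)
  linarith

lemma pos_gen (C : Chev H α hc e f) (n : ℕ) : ∀ (c : Fin r → ℕ), ∑ j, c j = n →
    ∀ χ : Module.Dual ℂ H, χ = ∑ j, (c j : ℂ) • α j → IsRoot H χ → ∀ x ∈ rootSpace H ⇑χ,
    x ∈ LieSubalgebra.lieSpan ℂ L (Set.range e) := by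
  induction n with
  | zero =>
    intro c hn χ hcc hχ
    exfalso
    apply hχ.1
    rw [hcc]
    refine Finset.sum_eq_zero fun j _ => ?_
    have : c j = 0 := by
      have := Finset.single_le_sum (f := c) (fun i _ => Nat.zero_le _) (Finset.mem_univ j)
      omega
    simp [this]
  | succ n ih =>
    intro c hn χ hcc hχ x hx
    obtain ⟨j, hj, t, ht0, ht⟩ := C.pos_pair hχ hcc
    obtain ⟨z, hz, hz0⟩ := hχ.neg'.exists_ne
    have hej : e j ∈ LieSubalgebra.lieSpan ℂ L (Set.range e) :=
      LieSubalgebra.subset_lieSpan ⟨j, rfl⟩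
    have hy0 : ⁅e j, z⁆ ≠ 0 := by
      intro h
      have hp : (C.sl2 j).HasPrimitiveVectorWith z (-(t : ℂ)) :=
        ⟨hz0, by rw [mem_rs.1 hz, LinearMap.neg_apply, ht], h⟩
      obtain ⟨m, hm⟩ := hp.exists_nat
      have : -t = (m : ℤ) := by exact_mod_cast hm
      omega
    obtain ⟨x', hx', hk⟩ := exists_pair (rs_lie (C.e_mem j) hz) hy0
    have hne : ⁅e j, x'⁆ ≠ 0 := by
      intro h
      rw [kf_inv, h] at hk
      simp at hk
    have hx'0 : x' ≠ 0 := by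
      rintro rfl
      simp at hne
    have hm := rs_lie (C.e_mem j) hx'
    have hww : α j + -(α j + -χ) = χ := by abel
    rw [hww] at hm
    rcases rs_root hx' hx'0 with h | h
    · have : χ = α j := by
        rw [neg_eq_zero, ← sub_eq_add_neg, sub_eq_zero] at h
        exact h.symm
      obtain ⟨k, rfl⟩ := dim1 (C.base.isRoot j) (C.e_mem j) (C.e_ne j) (this ▸ hx)
      exact LieSubalgebra.smul_mem _ _ hej
    · obtain ⟨k, rfl⟩ := dim1 hχ hm hne hx
      refine LieSubalgebra.smul_mem _ _ (LieSubalgebra.lie_mem _ hej ?_)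
      refine ih (fun i => if i = j then c i - 1 else c i) ?_ _ ?_ h x' hx'
      · have h1 := Finset.add_sum_erase Finset.univ c (Finset.mem_univ j)
        have h2 := Finset.add_sum_erase Finset.univ (fun i => if i = j then c i - 1 else c i)
          (Finset.mem_univ j)
        have h3 : ∑ i ∈ Finset.univ.erase j, (if i = j then c i - 1 else c i) =
            ∑ i ∈ Finset.univ.erase j, c i :=
          Finset.sum_congr rfl fun i hi => by simp [Finset.ne_of_mem_erase hi]
        simp only [if_true] at h2
        omega
      · rw [neg_add_rev, neg_neg, ← sub_eq_add_neg, sub_eq_iff_eq_add]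
        conv_lhs => rw [hcc]
        conv_rhs => rw [single_eq (α := α) j]
        rw [← Finset.sum_add_distrib]
        refine Finset.sum_congr rfl fun i _ => ?_
        rw [← add_smul]
        congr 1
        by_cases hi : i = j
        · subst hi
          simp only [if_true]
          rw [Nat.cast_sub hj]
          push_cast
          ring
        · simp [hi]

/-- `χ` is a nonnegative combination. -/
def Pos (α : Fin r → Module.Dual ℂ H) (χ : Module.Dual ℂ H) : Prop :=
  ∃ c : Fin r → ℕ, χ = ∑ j, (c j : ℂ) • α j

lemma mem_e (C : Chev H α hc e f) {χ : Module.Dual ℂ H} (hχ : IsRoot H χ) (hp : Pos α χ) {x : L}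
    (hx : x ∈ rootSpace H ⇑χ) : x ∈ LieSubalgebra.lieSpan ℂ L (Set.range e) := by
  obtain ⟨c, hcc⟩ := hp
  exact C.pos_gen _ c rfl χ hcc hχ x hx

lemma mem_f (C : Chev H α hc e f) {χ : Module.Dual ℂ H} (hχ : IsRoot H χ) (hp : Pos α (-χ)) {x : L}
    (hx : x ∈ rootSpace H ⇑χ) : x ∈ LieSubalgebra.lieSpan ℂ L (Set.range f) := by
  refine C.neg.mem_e hχ ?_ hx
  obtain ⟨c, hcc⟩ := hp
  exact ⟨c, by rw [← neg_neg χ, hcc]; simp⟩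

lemma pos_or (C : Chev H α hc e f) {χ : Module.Dual ℂ H} (hχ : IsRoot H χ) : Pos α χ ∨ Pos α (-χ) := by
  rcases C.base.pos_neg χ hχ with h | ⟨c, h⟩
  · exact Or.inl h
  · exact Or.inr ⟨c, by rw [h, neg_neg]⟩

lemma not_both (C : Chev H α hc e f) {χ : Module.Dual ℂ H} (hχ : χ ≠ 0) (h1 : Pos α χ)
    (h2 : Pos α (-χ)) : False := by
  obtain ⟨c, hc1⟩ := h1
  obtain ⟨c', hc2⟩ := h2
  have h3 : ∑ j, (c j : ℂ) • α j = ∑ j, (-(c' j : ℂ)) • α j := by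
    rw [← hc1, ← neg_neg χ, hc2]; simp
  have h4 := C.coef_eq h3
  apply hχ
  rw [hc1]
  refine Finset.sum_eq_zero fun j _ => ?_
  have h5 : (c j : ℤ) = -(c' j : ℤ) := by exact_mod_cast congrFun h4 j
  have : c j = 0 := by omega
  simp [this]

lemma tt_mem (C : Chev H α hc e f) (χ : Module.Dual ℂ H) : tt χ ∈ Submodule.span ℂ (Set.range hc) := by
  have hα : ∀ c : Fin r → ℂ, tt (∑ j, c j • α j) ∈ Submodule.span ℂ (Set.range hc) := by
    intro c
    have : tt (∑ j, c j • α j) = ∑ j, c j • tt (α j) := by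
      simp [tt]
    rw [this]
    refine Submodule.sum_mem _ fun j _ => Submodule.smul_mem _ _ ?_
    obtain ⟨d, hd, h⟩ := C.dpos j
    rw [h]
    exact Submodule.smul_mem _ _ (Submodule.subset_span ⟨j, rfl⟩)
  have hχ : χ ∈ Submodule.span ℂ (Set.range (Weight.toLinear ℂ H L)) := by
    rw [IsKilling.span_weight_eq_top]; trivial
  induction hχ using Submodule.span_induction with
  | mem x hx =>
    obtain ⟨w, rfl⟩ := hx
    by_cases hw : w.IsZero
    · have : Weight.toLinear ℂ H L w = 0 := Weight.coe_toLinear_eq_zero_iff.2 hw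
      rw [this]
      have : tt (0 : Module.Dual ℂ H) = 0 := map_zero _
      rw [this]; exact Submodule.zero_mem _
    · rcases C.base.pos_neg _ (isRoot_weight hw) with ⟨c, h⟩ | ⟨c, h⟩
      · rw [h]; exact hα _
      · rw [h]
        have := hα fun j => -(c j : ℂ)
        simpa using this
  | zero =>
    have : tt (0 : Module.Dual ℂ H) = 0 := map_zero _
    rw [this]; exact Submodule.zero_mem _
  | add x y _ _ hx hy => rw [tt_add]; exact Submodule.add_mem _ hx hy
  | smul a x _ hx => rw [tt_smul]; exact Submodule.smul_mem _ _ hx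

lemma tt_surj (h : H) : ∃ χ : Module.Dual ℂ H, tt χ = h :=
  ⟨IsKilling.cartanEquivDual H h, LinearEquiv.symm_apply_apply _ _⟩

lemma H_mem (C : Chev H α hc e f) (S : LieSubalgebra ℂ L) (he : ∀ i, e i ∈ S) (hf : ∀ i, f i ∈ S)
    (h : H) : (h : L) ∈ S := by
  obtain ⟨χ, rfl⟩ := tt_surj h
  have h1 := C.tt_mem χ
  have h2 : Submodule.span ℂ (Set.range hc) ≤ S.toSubmodule.comap H.toSubmodule.subtype := by
    rw [Submodule.span_le]
    rintro _ ⟨j, rfl⟩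
    change (hc j : L) ∈ S
    rw [← C.lie]
    exact S.lie_mem (he j) (hf j)
  exact h2 h1

lemma gen (C : Chev H α hc e f) (S : LieSubalgebra ℂ L) (he : ∀ i, e i ∈ S) (hf : ∀ i, f i ∈ S) :
    S = ⊤ := by
  obtain ⟨ι, _, w, b, hb, -⟩ := exists_weight_basis (L := L) (H := H)
  have hE : LieSubalgebra.lieSpan ℂ L (Set.range e) ≤ S := by
    rw [LieSubalgebra.lieSpan_le]
    rintro _ ⟨j, rfl⟩
    exact he j
  have hF : LieSubalgebra.lieSpan ℂ L (Set.range f) ≤ S := by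
    rw [LieSubalgebra.lieSpan_le]
    rintro _ ⟨j, rfl⟩
    exact hf j
  have hbS : ∀ i, b i ∈ S := by
    intro i
    have hbi : b i ∈ rootSpace H ⇑(w i).toLinear := hb i
    rcases rs_root hbi (b.ne_zero i) with h | h
    · rw [h] at hbi
      exact C.H_mem S he hf ⟨_, rs_zero hbi⟩
    · rcases C.pos_or h with hp | hp
      · exact hE (C.mem_e h hp hbi)
      · exact hF (C.mem_f h hp hbi)
  rw [eq_top_iff]
  intro x _
  have h1 : Submodule.span ℂ (Set.range b) ≤ S.toSubmodule := by
    rw [Submodule.span_le]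
    rintro _ ⟨j, rfl⟩
    exact hbS j
  rw [b.span_eq] at h1
  exact h1 (Submodule.mem_top : x ∈ ⊤)

end Chev
end Roots3

section Roots4
variable [FiniteDimensional ℂ L] [LieAlgebra.IsSemisimple ℂ L]
variable {H : LieSubalgebra ℂ L} [H.IsCartanSubalgebra]
namespace Chev
variable {r : ℕ} {α : Fin r → Module.Dual ℂ H} {hc : Fin r → H} {e f : Fin r → L}

lemma pos_simple (j : Fin r) : Pos α (α j) :=
  ⟨fun k => if k = j then 1 else 0, by
    conv_lhs => rw [single_eq (α := α) j]
    exact Finset.sum_congr rfl fun k _ => by by_cases h : k = j <;> simp [h]⟩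

/-- Sum of the positive roots. -/
noncomputable def rho2 (α : Fin r → Module.Dual ℂ H) : Module.Dual ℂ H :=
  ∑ χ ∈ Finset.univ.filter (fun χ : Weight ℂ H L => χ.IsNonZero ∧ Pos α χ.toLinear), χ.toLinear

lemma not_mult (C : Chev H α hc e f) {j : Fin r} {w : Weight ℂ H L} (hw : w.toLinear = α j)
    {χ : Weight ℂ H L} (h0 : χ.IsNonZero) (hp : Pos α χ.toLinear) (hne : χ ≠ w) (k : ℂ)
    (h : χ.toLinear = k • α j) : False := by
  have h1 : (χ : H → ℂ) = k • ⇑w := by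
    ext t
    have := LinearMap.congr_fun h t
    rw [← hw] at this
    exact this
  rcases IsKilling.eq_neg_or_eq_of_eq_smul w χ h0 k h1 with h2 | h2
  · have h3 : Pos α (-χ.toLinear) := by
      have : -χ.toLinear = α j := by
        rw [h2, ← hw]
        ext t
        simp
      rw [this]
      exact pos_simple j
    exact C.not_both (isRoot_weight h0).1 hp h3
  · exact hne h2

lemma rho2_hc (C : Chev H α hc e f) (j : Fin r) : rho2 α (hc j) = 2 := by
  obtain ⟨w, hw, hwj, hcj⟩ := C.weight j
  rw [rho2, LinearMap.sum_apply]
  rw [← Finset.add_sum_erase _ _ (a := w) (by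
    simp only [Finset.mem_filter, Finset.mem_univ, true_and]
    exact ⟨hw, hwj ▸ pos_simple j⟩)]
  rw [hwj, C.two]
  have hrefl : ∀ χ : Weight ℂ H L, (IsKilling.reflectRoot w χ).toLinear =
      χ.toLinear - χ (hc j) • α j := by
    intro χ
    rw [hcj, ← hwj]
    rfl
  have hrt : ∀ χ : Weight ℂ H L, (IsKilling.reflectRoot w χ) (hc j) = - χ (hc j) := by
    intro χ
    have := LinearMap.congr_fun (hrefl χ) (hc j)
    rw [LinearMap.sub_apply, LinearMap.smul_apply, C.two] at this
    refine this.trans ?_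
    rw [Weight.toLinear_apply, smul_eq_mul]
    ring
  have key : ∑ χ ∈ (Finset.univ.filter
      (fun χ : Weight ℂ H L => χ.IsNonZero ∧ Pos α χ.toLinear)).erase w,
      (Weight.toLinear ℂ H L χ) (hc j) = 0 := by
    refine Finset.sum_involution (fun χ _ => IsKilling.reflectRoot w χ) ?_ ?_ ?_ ?_
    · intro χ _
      simp only [Weight.toLinear_apply]
      rw [hrt]; ring
    · intro χ _ hne heq
      apply hne
      have := hrt χ
      rw [heq] at this
      rw [Weight.toLinear_apply]
      linear_combination this / 2
    · intro χ hχ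
      simp only [Finset.mem_erase, Finset.mem_filter, Finset.mem_univ, true_and] at hχ ⊢
      obtain ⟨hne, h0, hp⟩ := hχ
      have hnm := C.not_mult hwj h0 hp hne
      have hnz : (IsKilling.reflectRoot w χ).IsNonZero := by
        intro hz
        have h1 : (IsKilling.reflectRoot w χ).toLinear = 0 := Weight.coe_toLinear_eq_zero_iff.2 hz
        rw [hrefl, sub_eq_zero] at h1
        exact hnm _ h1
      refine ⟨?_, hnz, ?_⟩
      · intro h1
        have h2 := hrefl χ
        rw [h1, hwj] at h2
        refine hnm (1 + χ (hc j)) ?_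
        rw [add_smul, one_smul]
        exact eq_add_of_sub_eq h2.symm
      · obtain ⟨n, hn⟩ := hp
        obtain ⟨t, -, -, ht⟩ := root_coroot_bound (χ := χ) hw
        rw [← hcj] at ht
        have h3 : (IsKilling.reflectRoot w χ).toLinear =
            ∑ k, (((n k : ℤ) - t * (if k = j then 1 else 0) : ℤ) : ℂ) • α k := by
          rw [hrefl, hn, ht]
          conv_lhs => rw [single_eq (α := α) j]
          rw [Finset.smul_sum, ← Finset.sum_sub_distrib]
          refine Finset.sum_congr rfl fun k _ => ?_
          rw [smul_smul, ← sub_smul]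
          push_cast
          rfl
        rcases C.sign (isRoot_weight hnz) h3 with hs | hs
        · refine ⟨fun k => ((n k : ℤ) - t * (if k = j then 1 else 0) : ℤ).toNat, ?_⟩
          rw [h3]
          refine Finset.sum_congr rfl fun k _ => ?_
          congr 1
          have := Int.toNat_of_nonneg (hs k)
          exact_mod_cast this.symm
        · exfalso
          refine hnm (n j) ?_
          rw [hn, Finset.sum_eq_single j]
          · intro k _ hk
            have := hs k
            simp only [hk, if_false, mul_zero, sub_zero] at this
            have : n k = 0 := by omega
            simp [this]
          · simp
    · intro χ _
      apply Weight.ext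
      intro t
      have h1 := LinearMap.congr_fun (hrefl (IsKilling.reflectRoot w χ)) t
      have h2 := LinearMap.congr_fun (hrefl χ) t
      rw [hrt] at h1
      simp only [LinearMap.sub_apply, LinearMap.smul_apply, Weight.toLinear_apply, smul_eq_mul] at h1 h2
      rw [h1, h2]
      ring
  rw [key, add_zero]

lemma tt_sum {ι : Type*} (s : Finset ι) (g : ι → Module.Dual ℂ H) : tt (∑ i ∈ s, g i) = ∑ i ∈ s, tt (g i) :=
  map_sum _ _ _

lemma exists_dat (C : Chev H α hc e f) :
    ∃ D : Dat H r, D.α = α ∧ D.hc = hc ∧ D.e = e ∧ D.f = f := by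
  obtain ⟨ι, _, w, b, hb, hsum⟩ := exists_weight_basis (L := L) (H := H)
  have hbm : ∀ i, b i ∈ rootSpace H ⇑(w i).toLinear := hb
  have hsymm : LinearMap.BilinForm.IsSymm (killingForm ℂ L) := ⟨kf_symm⟩
  let b' : Basis ι ℂ L := LinearMap.BilinForm.dualBasis (killingForm ℂ L) kf_nd b
  have hb1 : ∀ i z, b'.repr z i = killingForm ℂ L z (b i) := fun i z =>
    LinearMap.BilinForm.dualBasis_repr_apply _ _ _ _
  have hb2 : ∀ i z, b.repr z i = killingForm ℂ L z (b' i) := fun i z => by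
    have h1 : LinearMap.BilinForm.dualBasis (killingForm ℂ L) kf_nd b' = b :=
      LinearMap.BilinForm.dualBasis_dualBasis kf_nd hsymm b
    conv_lhs => rw [← h1]
    exact LinearMap.BilinForm.dualBasis_repr_apply _ _ _ _
  have hbm' : ∀ i, b' i ∈ rootSpace H ⇑(-(w i).toLinear) := by
    intro i
    rw [mem_rs]
    intro h
    apply b'.ext_elem
    intro k
    rw [hb1, kf_inv, mem_rs.1 (hbm k), map_smul, ← hb1, map_smul, Finsupp.smul_apply, b'.repr_self]
    by_cases hik : i = k
    · subst hik; simp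
    · simp [hik]
  have hbb : ∀ i, killingForm ℂ L (b i) (b' i) = 1 := by
    intro i
    rw [← hb2]; simp
  have hbr : ∀ i, ⁅b i, b' i⁆ = (tt (w i).toLinear : L) := by
    intro i
    have := IsKilling.lie_eq_killingForm_smul_of_mem_rootSpace_of_mem_rootSpace_neg (hb i) (hbm' i)
    rw [hbb, one_smul] at this
    exact this
  let P : Weight ℂ H L → Prop := fun χ => χ.IsNonZero ∧ Pos α χ.toLinear
  let es : ι → L := fun i => if (w i).IsZero then 0 else if P (w i) then b i else b' i
  let fs : ι → L := fun i => if (w i).IsZero then 0 else if P (w i) then b' i else b i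
  let g : Module.Dual ℂ H → Weight ℂ H L → ℂ := fun κ χ => if P χ then κ (tt χ.toLinear) else 0
  have hsq : ∀ κ : Module.Dual ℂ H, ∑ i, killingForm ℂ L (tt κ) (b' i) * killingForm ℂ L (tt κ) (b i) =
      κ (tt κ) := by
    intro κ
    rw [← tt_spec κ (tt κ)]
    conv_rhs => rw [← b.sum_repr (tt κ : L)]
    rw [map_sum]
    refine Finset.sum_congr rfl fun i _ => ?_
    rw [map_smul, hb2, smul_eq_mul, b.sum_repr]
  have hg : ∀ κ : Module.Dual ℂ H, ∑ i, g κ (w i) = κ (tt (rho2 α)) := by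
    intro κ
    rw [hsum (g κ) (fun χ hχ => if_neg fun h => h.1 hχ)]
    rw [rho2, tt_sum, map_sum, Finset.sum_filter]
  have hti : ∀ κ : Module.Dual ℂ H, (tt κ : L) ∈ rootSpace H ⇑(0 : Module.Dual ℂ H) := by
    intro κ
    rw [mem_rs]
    intro h
    rw [LinearMap.zero_apply, zero_smul]
    have : ⁅h, tt κ⁆ = 0 := trivial_lie_zero _ _ _ _
    exact congrArg Subtype.val this
  have hterm : ∀ (Y : Type) [AddCommGroup Y] [Module ℂ Y] [LieRingModule L Y] [LieModule ℂ L Y]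
      (κ : Module.Dual ℂ H) (y : Y), (∀ x : H, ⁅(x : L), y⁆ = κ x • y) → ∀ i,
      ⁅b i, ⁅b' i, y⁆⁆ = (killingForm ℂ L (tt κ) (b' i) * killingForm ℂ L (tt κ) (b i) + g κ (w i)) • y +
        ⁅fs i, ⁅es i, y⁆⁆ := by
    intro Y _ _ _ _ κ y hy i
    by_cases hz : (w i).IsZero
    · have h0 : (w i).toLinear = 0 := Weight.coe_toLinear_eq_zero_iff.2 hz
      have h1 := hbm i
      have h2 := hbm' i
      rw [h0] at h1
      rw [h0, neg_zero] at h2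
      have e1 : ⁅b i, y⁆ = killingForm ℂ L (tt κ) (b i) • y := by
        have := hy ⟨b i, rs_zero h1⟩
        rw [← tt_spec] at this
        exact this
      have e2 : ⁅b' i, y⁆ = killingForm ℂ L (tt κ) (b' i) • y := by
        have := hy ⟨b' i, rs_zero h2⟩
        rw [← tt_spec] at this
        exact this
      have e3 : g κ (w i) = 0 := if_neg fun h => h.1 hz
      have e4 : fs i = 0 := if_pos hz
      rw [e2, lie_smul, e1, smul_smul, e3, e4, zero_lie, add_zero, add_zero]
    · have hr := isRoot_weight (w := w i) hz
      have e1 : killingForm ℂ L (tt κ) (b i) = 0 := kf_zero (hti κ) (hbm i) (by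
        rw [zero_add]; exact hr.1)
      rw [e1, mul_zero, zero_add]
      by_cases hp : P (w i)
      · have e3 : g κ (w i) = κ (tt (w i).toLinear) := if_pos hp
        have e4 : fs i = b' i := by simp [fs, hz, hp]
        have e5 : es i = b i := by simp [es, hz, hp]
        rw [e3, e4, e5, leibniz_lie, hbr, hy]
      · have e3 : g κ (w i) = 0 := if_neg hp
        have e4 : fs i = b i := by simp [fs, hz, hp]
        have e5 : es i = b' i := by simp [es, hz, hp]
        rw [e3, e4, e5, zero_smul, zero_add]
  have hes : ∀ i, es i ∈ LieSubalgebra.lieSpan ℂ L (Set.range e) := by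
    intro i
    by_cases hz : (w i).IsZero
    · simp [es, hz]
    · have hr := isRoot_weight (w := w i) hz
      by_cases hp : P (w i)
      · have e5 : es i = b i := by simp [es, hz, hp]
        rw [e5]
        exact C.mem_e hr hp.2 (hbm i)
      · have e5 : es i = b' i := by simp [es, hz, hp]
        rw [e5]
        exact C.mem_e hr.neg' ((C.pos_or hr).resolve_left fun h => hp ⟨hz, h⟩) (hbm' i)
  have hfs : ∀ i, fs i ∈ LieSubalgebra.lieSpan ℂ L (Set.range f) := by
    intro i
    by_cases hz : (w i).IsZero
    · simp [fs, hz]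
    · have hr := isRoot_weight (w := w i) hz
      by_cases hp : P (w i)
      · have e5 : fs i = b' i := by simp [fs, hz, hp]
        rw [e5]
        exact C.mem_f hr.neg' (by rw [neg_neg]; exact hp.2) (hbm' i)
      · have e5 : fs i = b i := by simp [fs, hz, hp]
        rw [e5]
        exact C.mem_f hr ((C.pos_or hr).resolve_left fun h => hp ⟨hz, h⟩) (hbm i)
  choose d hd hdt using fun j => C.dpos j
  refine ⟨{ α := α, hc := hc, e := e, f := f
            he := fun x i => mem_rs.1 (C.e_mem i) x
            hf := fun x i => mem_rs.1 (C.f_mem i) x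
            hef := fun i j => by
              by_cases hij : i = j
              · subst hij; simp [C.lie]
              · simp [hij, C.ef_zero hij]
            two := C.two
            indep := C.base.indep
            gen := C.gen
            N := Fintype.card ι
            es := fun s => es ((Fintype.equivFin ι).symm s)
            fs := fun s => fs ((Fintype.equivFin ι).symm s)
            hes := fun s => hes _
            hfs := fun s => hfs _
            c := fun κ => κ (tt κ) + κ (tt (rho2 α))
            cas := ?_
            d := d
            d_pos := hd
            c_sub := ?_ }, rfl, rfl, rfl, rfl⟩
  · intro Y _ _ _ _
    refine ⟨∑ i, toEnd ℂ L Y (b i) ∘ₗ toEnd ℂ L Y (b' i), ?_, ?_⟩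
    · intro x y
      have := casimir_comm b b' hb1 hb2 Y x y
      simpa [LinearMap.sum_apply] using this
    · intro κ y hy
      have h1 : (∑ i, toEnd ℂ L Y (b i) ∘ₗ toEnd ℂ L Y (b' i) : Y →ₗ[ℂ] Y) y = ∑ i, ⁅b i, ⁅b' i, y⁆⁆ := by
        simp [LinearMap.sum_apply]
      rw [h1, Finset.sum_congr rfl fun i _ => hterm Y κ y hy i, Finset.sum_add_distrib,
        ← Finset.sum_smul, Finset.sum_add_distrib, hsq, hg]
      congr 1
      exact (Equiv.sum_comp (Fintype.equivFin ι).symm fun i => ⁅fs i, ⁅es i, y⁆⁆).symm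
  · intro κ n
    set γ : Module.Dual ℂ H := ∑ j, (n j : ℂ) • α j with hγ
    have htg : tt γ = ∑ j, ((n j : ℂ) * (d j : ℂ)) • hc j := by
      rw [hγ, tt_sum]
      refine Finset.sum_congr rfl fun j _ => ?_
      rw [tt_smul, hdt, smul_smul]
    have hts : tt (κ - γ) = tt κ - tt γ := map_sub _ _ _
    have hx : ∀ ψ : Module.Dual ℂ H, ψ (tt γ) = ∑ j, ((n j : ℂ) * (d j : ℂ)) * ψ (hc j) := by
      intro ψ
      rw [htg, map_sum]
      exact Finset.sum_congr rfl fun j _ => by rw [map_smul, smul_eq_mul]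
    have e1 : κ (tt κ) + κ (tt (rho2 α)) - ((κ - γ) (tt (κ - γ)) + (κ - γ) (tt (rho2 α))) =
        2 * κ (tt γ) - γ (tt γ) + rho2 α (tt γ) := by
      rw [hts]
      simp only [LinearMap.sub_apply, map_sub]
      rw [tt_symm γ κ, tt_symm γ (rho2 α)]
      ring
    rw [e1, hx, hx, hx, Finset.mul_sum, ← Finset.sum_sub_distrib, ← Finset.sum_add_distrib]
    refine Finset.sum_congr rfl fun j _ => ?_
    rw [C.rho2_hc]
    ring

end Chev
end Roots4

section Low
variable {H : LieSubalgebra ℂ L} {r : ℕ}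
namespace Dat

lemma exists_h0 [FiniteDimensional ℂ L] (D : Dat H r) : ∃ h : H, ∀ j, D.α j h = 1 := by
  obtain ⟨φ, hφ⟩ : ∃ φ : Module.Dual ℂ (Module.Dual ℂ H), ∀ j, φ (D.α j) = 1 := by
    obtain ⟨φ, hφ⟩ := LinearMap.exists_extend ((Basis.span D.indep).constr ℂ (fun _ => (1 : ℂ)))
    refine ⟨φ, fun j => ?_⟩
    have h1 := LinearMap.congr_fun hφ (Basis.span D.indep j)
    rw [Basis.constr_basis] at h1
    rw [← h1]
    simp [Basis.span_apply]
  refine ⟨(Module.evalEquiv ℂ H).symm φ, fun j => ?_⟩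
  rw [← hφ j]
  simp

/-- A nonzero finite-dimensional submodule contains a nonzero vector killed by all `f i`. -/
lemma exists_low [FiniteDimensional ℂ L] (D : Dat H r) {Y : Type} [AddCommGroup Y] [Module ℂ Y] [LieRingModule L Y]
    [LieModule ℂ L Y] [FiniteDimensional ℂ Y] (Q : LieSubmodule ℂ L Y) (hQ : Q ≠ ⊥) :
    ∃ y ∈ Q, y ≠ 0 ∧ ∀ i, ⁅D.f i, y⁆ = 0 := by
  obtain ⟨h, hh⟩ := D.exists_h0
  have hnt : Nontrivial Q := (LieSubmodule.nontrivial_iff_ne_bot ℂ L Y).2 hQ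
  let T : Module.End ℂ Q := toEnd ℂ L Q (h : L)
  obtain ⟨c0, hc0⟩ := Module.End.exists_eigenvalue T
  have hfin : {c : ℂ | T.HasEigenvalue c}.Finite := Module.End.finite_hasEigenvalue T
  obtain ⟨c, hc, hmin⟩ := Set.exists_min_image _ Complex.re hfin ⟨c0, hc0⟩
  obtain ⟨y, hy⟩ := hc.exists_hasEigenvector
  refine ⟨y, y.2, fun h0 => hy.2 (Subtype.ext h0), fun i => ?_⟩
  by_contra hne
  have hTy : ⁅(h : L), y⁆ = c • y := hy.apply_eq_smul
  have h1 : T ⁅D.f i, y⁆ = (c - 1) • ⁅D.f i, y⁆ := by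
    change ⁅(h : L), ⁅D.f i, y⁆⁆ = _
    rw [leibniz_lie, D.hf, hh, hTy, lie_smul, smul_lie, sub_smul, neg_smul, one_smul]
    abel
  have h2 : T.HasEigenvalue (c - 1) := by
    refine Module.End.hasEigenvalue_of_hasEigenvector (x := ⁅D.f i, y⁆)
      ⟨Module.End.mem_eigenspace_iff.2 h1, fun h0 => hne ?_⟩
    have := congrArg Subtype.val h0
    simpa using this
  have := hmin _ h2
  simp at this
  linarith

lemma low [FiniteDimensional ℂ L] [LieAlgebra.IsSemisimple ℂ L] (D : Dat H r) (P : Submodule ℂ L)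
    (h1 : ∀ y : L, (∀ i, ⁅D.f i, y⁆ = 0) → y ∈ P)
    (h2 : ∀ i, ∀ p ∈ P, ⁅D.e i, p⁆ ∈ P) : P = ⊤ := by
  let Q : Submodule ℂ L := sInf {P | (∀ y : L, (∀ i, ⁅D.f i, y⁆ = 0) → y ∈ P) ∧
    (∀ i, ∀ p ∈ P, ⁅D.e i, p⁆ ∈ P)}
  have hQP : Q ≤ P := sInf_le ⟨h1, h2⟩
  have hQ1 : ∀ y : L, (∀ i, ⁅D.f i, y⁆ = 0) → y ∈ Q := by
    intro y hy
    rw [Submodule.mem_sInf]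
    intro R hR
    exact hR.1 y hy
  have hQ2 : ∀ i, ∀ p ∈ Q, ⁅D.e i, p⁆ ∈ Q := by
    intro i p hp
    rw [Submodule.mem_sInf] at hp ⊢
    intro R hR
    exact hR.2 i p (hp R hR)
  let R : Submodule ℂ L :=
    { carrier := {p | p ∈ Q ∧ (∀ h : H, ⁅(h : L), p⁆ ∈ Q) ∧ ∀ i, ⁅D.f i, p⁆ ∈ Q}
      add_mem' := fun {a b} ha hb => ⟨Q.add_mem ha.1 hb.1,
        fun h => by rw [lie_add]; exact Q.add_mem (ha.2.1 h) (hb.2.1 h),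
        fun i => by rw [lie_add]; exact Q.add_mem (ha.2.2 i) (hb.2.2 i)⟩
      zero_mem' := ⟨Q.zero_mem, fun h => by rw [lie_zero]; exact Q.zero_mem,
        fun i => by rw [lie_zero]; exact Q.zero_mem⟩
      smul_mem' := fun c a ha => ⟨Q.smul_mem c ha.1,
        fun h => by rw [lie_smul]; exact Q.smul_mem c (ha.2.1 h),
        fun i => by rw [lie_smul]; exact Q.smul_mem c (ha.2.2 i)⟩ }
  have hQR : Q ≤ R := by
    refine sInf_le ⟨?_, ?_⟩
    · intro y hy
      refine ⟨hQ1 y hy, fun h => hQ1 _ fun i => ?_, fun i => by rw [hy]; exact Q.zero_mem⟩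
      rw [leibniz_lie, hy, lie_zero, add_zero, ← lie_skew (D.f i) (h : L), D.hf, neg_lie, smul_lie, hy]
      simp
    · intro j p hp
      refine ⟨hQ2 j p hp.1, fun h => ?_, fun i => ?_⟩
      · rw [leibniz_lie, D.he, smul_lie]
        exact Q.add_mem (Q.smul_mem _ (hQ2 j p hp.1)) (hQ2 j _ (hp.2.1 h))
      · rw [leibniz_lie, ← lie_skew (D.f i) (D.e j), D.hef]
        refine Q.add_mem ?_ (hQ2 j _ (hp.2.2 i))
        split_ifs
        · rw [neg_lie]; exact Q.neg_mem (hp.2.1 _)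
        · simp
  let I : LieIdeal ℂ L := { Q with
    lie_mem := fun {x p} hp => D.stable Q hQ2 (fun i p hp => (hQR hp).2.2 i) x p hp }
  obtain ⟨J, hJ⟩ := exists_isCompl I
  have hJb : J = ⊥ := by
    by_contra hne
    obtain ⟨y, hy, hy0, hyf⟩ := D.exists_low J hne
    have h3 : y ∈ I ⊓ J := ⟨hQ1 y hyf, hy⟩
    rw [hJ.inf_eq_bot] at h3
    exact hy0 (by simpa using h3)
  have hI : I = ⊤ := by
    have := hJ.sup_eq_top
    rwa [hJb, sup_bot_eq] at this
  rw [eq_top_iff]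
  intro x _
  apply hQP
  have : x ∈ I := by rw [hI]; trivial
  exact this

end Dat
end Low

lemma factor_through {A Y Z : Type*} [AddCommGroup A] [Module ℂ A] [AddCommGroup Y] [Module ℂ Y]
    [AddCommGroup Z] [Module ℂ Z] (p : A →ₗ[ℂ] Y) (hp : Function.Surjective p) (q : A →ₗ[ℂ] Z)
    (h : ∀ a, p a = 0 → q a = 0) : ∃ ψ : Y →ₗ[ℂ] Z, ∀ a, ψ (p a) = q a := by
  obtain ⟨g, hg⟩ := p.exists_rightInverse_of_surjective (LinearMap.range_eq_top.2 hp)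
  refine ⟨q ∘ₗ g, fun a => ?_⟩
  have h1 : p (g (p a) - a) = 0 := by
    rw [map_sub, sub_eq_zero]
    exact LinearMap.congr_fun hg (p a)
  have h2 := h _ h1
  rw [map_sub, sub_eq_zero] at h2
  exact h2

section DualVec
variable {H : LieSubalgebra ℂ L} {r : ℕ}
variable {V : Type} [AddCommGroup V] [Module ℂ V] [LieRingModule L V] [LieModule ℂ L V]
namespace Dat

lemma exists_dualvec (D : Dat H r) (hV : IsSimpleOrder (LieSubmodule ℂ L V)) {μ : Module.Dual ℂ H} {v : V}
    (hv : D.Sing μ v) (hv0 : v ≠ 0) :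
    ∃ ξ : Module.Dual ℂ V, ξ v = 1 ∧ (∀ i u, ξ ⁅D.f i, u⁆ = 0) ∧
      ∀ (h : H) u, ξ ⁅(h : L), u⁆ = μ h * ξ u := by
  have hs := D.act_surj hV hv hv0
  obtain ⟨ξ, hξ⟩ := factor_through (D.act v) hs (Finsupp.lapply [] : A r →ₗ[ℂ] ℂ) (by
    intro a ha
    have h1 := D.act_hom_eq_zero hv.2 ha 0
    rw [isHom_zero (isHom_hom 0 a), act_single] at h1
    rcases smul_eq_zero.1 h1 with h2 | h2
    · have : (hom 0 a) [] = a [] := by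
        simp only [hom]
        rw [Finsupp.filter_apply, if_pos]
        ext j; simp
      rw [this] at h2
      exact h2
    · exact absurd h2 hv0)
  refine ⟨ξ, ?_, ?_, ?_⟩
  · have := hξ (Finsupp.single [] 1)
    simpa [wact] using this
  · intro i u
    obtain ⟨a, rfl⟩ := hs u
    rw [← act_F, hξ]
    induction a using Finsupp.induction_linear with
    | zero => simp
    | add a b ha hb => rw [map_add, map_add, ha, hb, add_zero]
    | single w c => simp
  · intro h u
    obtain ⟨a, rfl⟩ := hs u
    induction a using Finsupp.induction_linear with
    | zero => simp
    | add a b ha hb => rw [map_add, lie_add, map_add, ha, hb, map_add]; ring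
    | single w c =>
      have h1 : ξ (D.wact v w) = if w = [] then 1 else 0 := by
        have := hξ (Finsupp.single w 1)
        rw [act_single, one_smul] at this
        rw [this, Finsupp.lapply_apply, Finsupp.single_apply]
      rw [act_single, lie_smul, D.h_wact' h v μ hv.2, map_smul, map_smul, map_smul, h1]
      by_cases hw : w = []
      · subst hw; simp; ring
      · simp [hw]

lemma dual_act_surj [FiniteDimensional ℂ V] (D' : Dat H r) (hV : IsSimpleOrder (LieSubmodule ℂ L V))
    {κ : Module.Dual ℂ H} {ξ : Module.Dual ℂ V} (hξ : D'.Sing κ ξ) (hξ0 : ξ ≠ 0) :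
    Function.Surjective (D'.act ξ) := by
  let R := LinearMap.range (D'.act ξ)
  have hst : ∀ (x : L) (p : Module.Dual ℂ V), p ∈ R → ⁅x, p⁆ ∈ R := by
    intro x p hp
    refine D'.stable R ?_ ?_ x p hp
    · rintro i _ ⟨a, rfl⟩
      exact ⟨_, (D'.e_act_sing hξ i a).symm⟩
    · rintro i _ ⟨a, rfl⟩
      exact ⟨_, D'.act_F ξ i a⟩
  let Q : LieSubmodule ℂ L V := { R.dualCoannihilator with
    lie_mem := fun {x u} hu => by
      change ⁅x, u⁆ ∈ R.dualCoannihilator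
      have hu' : u ∈ R.dualCoannihilator := hu
      rw [Submodule.mem_dualCoannihilator] at hu' ⊢
      intro p hp
      have := hu' _ (hst x p hp)
      rw [Module.Dual.lie_apply] at this
      exact neg_eq_zero.1 this }
  have hξR : ξ ∈ R := ⟨Finsupp.single [] 1, by simp [wact]⟩
  have hQ : Q = ⊥ := by
    rcases hV.eq_bot_or_eq_top Q with h | h
    · exact h
    · exfalso
      apply hξ0
      ext u
      have hu : u ∈ Q := by rw [h]; trivial
      have hu' : u ∈ R.dualCoannihilator := hu
      rw [Submodule.mem_dualCoannihilator] at hu'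
      exact hu' ξ hξR
  have hR : R.dualCoannihilator = ⊥ := by
    rw [eq_bot_iff]
    intro u hu
    have hu' : u ∈ Q := hu
    rw [hQ] at hu'
    simpa using hu'
  have hT : R = ⊤ := by
    have := Subspace.dualCoannihilator_dualAnnihilator_eq (W := R)
    rw [hR] at this
    rw [← this]
    simp
  exact LinearMap.range_eq_top.1 hT

end Dat
end DualVec

section Tensor
variable {V U W : Type} [AddCommGroup V] [Module ℂ V] [AddCommGroup U] [Module ℂ U] [AddCommGroup W] [Module ℂ W]
  [FiniteDimensional ℂ V] [FiniteDimensional ℂ U] [FiniteDimensional ℂ W] [FiniteDimensional ℂ L]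

lemma exists_theta (B : W →ₗ[ℂ] U →ₗ[ℂ] ℂ) (h1 : ∀ w, (∀ v, B w v = 0) → w = 0)
    (h2 : ∀ v, (∀ w, B w v = 0) → v = 0) :
    ∃ Θ : (L ⊗[ℂ] (V ⊗[ℂ] U)) ≃ₗ[ℂ] (W →ₗ[ℂ] (Module.Dual ℂ V →ₗ[ℂ] L)),
      ∀ l v u w ξ, Θ (l ⊗ₜ (v ⊗ₜ u)) w ξ = (B w u * ξ v) • l := by
  have hi1 : Function.Injective B := by
    rw [injective_iff_map_eq_zero]
    intro w hw
    exact h1 w fun v => by rw [hw]; rfl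
  have hi2 : Function.Injective B.flip := by
    rw [injective_iff_map_eq_zero]
    intro v hv
    exact h2 v fun w => by
      have := LinearMap.congr_fun hv w
      exact this
  have hd1 : finrank ℂ W ≤ finrank ℂ U := by
    have := LinearMap.finrank_le_finrank_of_injective hi1
    rwa [Subspace.dual_finrank_eq] at this
  have hd2 : finrank ℂ U ≤ finrank ℂ W := by
    have := LinearMap.finrank_le_finrank_of_injective hi2
    rwa [Subspace.dual_finrank_eq] at this
  let eU : U ≃ₗ[ℂ] Module.Dual ℂ W := LinearEquiv.ofBijective B.flip
    ⟨hi2, (LinearMap.injective_iff_surjective_of_finrank_eq_finrank (by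
      rw [Subspace.dual_finrank_eq]; omega)).1 hi2⟩
  let eV : V ≃ₗ[ℂ] Module.Dual ℂ (Module.Dual ℂ V) := Module.evalEquiv ℂ V
  let Θ1 : (L ⊗[ℂ] (V ⊗[ℂ] U)) ≃ₗ[ℂ] (U ⊗[ℂ] (V ⊗[ℂ] L)) :=
    (TensorProduct.assoc ℂ L V U).symm ≪≫ₗ TensorProduct.comm ℂ _ _ ≪≫ₗ
      TensorProduct.congr (LinearEquiv.refl ℂ U) (TensorProduct.comm ℂ L V)
  let Θ2 : (U ⊗[ℂ] (V ⊗[ℂ] L)) ≃ₗ[ℂ] (Module.Dual ℂ W ⊗[ℂ] (Module.Dual ℂ (Module.Dual ℂ V) ⊗[ℂ] L)) :=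
    TensorProduct.congr eU (TensorProduct.congr eV (LinearEquiv.refl ℂ L))
  let Θ3 : (Module.Dual ℂ W ⊗[ℂ] (Module.Dual ℂ (Module.Dual ℂ V) ⊗[ℂ] L)) ≃ₗ[ℂ]
      (W →ₗ[ℂ] (Module.Dual ℂ V →ₗ[ℂ] L)) :=
    TensorProduct.congr (LinearEquiv.refl ℂ _) (dualTensorHomEquiv ℂ (Module.Dual ℂ V) L) ≪≫ₗ
      dualTensorHomEquiv ℂ W (Module.Dual ℂ V →ₗ[ℂ] L)
  refine ⟨Θ1 ≪≫ₗ Θ2 ≪≫ₗ Θ3, fun l v u w ξ => ?_⟩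
  simp [Θ1, Θ2, Θ3, eU, eV, smul_smul]
  rfl

lemma theta_equiv [LieRingModule L V] [LieModule ℂ L V] [LieRingModule L U] [LieModule ℂ L U]
    [LieRingModule L W] [LieModule ℂ L W] (B : W →ₗ[ℂ] U →ₗ[ℂ] ℂ)
    (h3 : ∀ (x : L) (w : W) (v : U), B ⁅x, w⁆ v + B w ⁅x, v⁆ = 0)
    (Θ : (L ⊗[ℂ] (V ⊗[ℂ] U)) ≃ₗ[ℂ] (W →ₗ[ℂ] (Module.Dual ℂ V →ₗ[ℂ] L)))
    (hΘ : ∀ l v u w ξ, Θ (l ⊗ₜ (v ⊗ₜ u)) w ξ = (B w u * ξ v) • l)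
    (x : L) (t : L ⊗[ℂ] (V ⊗[ℂ] U)) (w : W) (ξ : Module.Dual ℂ V) :
    Θ ⁅x, t⁆ w ξ = ⁅x, Θ t w ξ⁆ - Θ t ⁅x, w⁆ ξ - Θ t w ⁅x, ξ⁆ := by
  induction t using TensorProduct.induction_on with
  | zero => simp
  | add a b ha hb =>
    simp only [lie_add, map_add, LinearMap.add_apply, ha, hb]
    abel
  | tmul l s =>
    induction s using TensorProduct.induction_on with
    | zero => simp
    | add a b ha hb =>
      simp only [TensorProduct.tmul_add, lie_add, map_add, LinearMap.add_apply, ha, hb]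
      abel
    | tmul v u =>
      rw [TensorProduct.LieModule.lie_tmul_right, TensorProduct.LieModule.lie_tmul_right,
        TensorProduct.tmul_add]
      simp only [map_add, LinearMap.add_apply, hΘ, Module.Dual.lie_apply, lie_smul]
      have := h3 x w u
      have h4 : B ⁅x, w⁆ u = - B w ⁅x, u⁆ := by linear_combination this
      rw [h4]
      module

end Tensor

lemma Dat.act_inter {H : LieSubalgebra ℂ L} {r : ℕ} (D : Dat H r)
    {Y Z : Type} [AddCommGroup Y] [Module ℂ Y] [LieRingModule L Y] [LieModule ℂ L Y]
    [AddCommGroup Z] [Module ℂ Z] [LieRingModule L Z] [LieModule ℂ L Z]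
    (T : Y →ₗ[ℂ] Z) (hT : ∀ i u, T ⁅D.f i, u⁆ = ⁅D.f i, T u⁆) (y : Y) (a : A r) :
    T (D.act y a) = D.act (T y) a := by
  have key : ∀ w : List (Fin r), T (D.wact y w) = D.wact (T y) w := by
    intro w
    induction w with
    | nil => rfl
    | cons i w ih =>
      have h1 : ∀ (u : Z), D.wact u (i :: w) = ⁅D.f i, D.wact u w⁆ := fun u => rfl
      have h2 : ∀ (u : Y), D.wact u (i :: w) = ⁅D.f i, D.wact u w⁆ := fun u => rfl
      rw [h1, h2, hT, ih]
  induction a using Finsupp.induction_linear with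
  | zero => simp
  | add a b ha hb => rw [map_add, map_add, map_add, ha, hb]
  | single w c => rw [D.act_single, D.act_single, map_smul, key]

/-- The intertwiner from the dual to the adjoint representation. -/
lemma exists_psi [FiniteDimensional ℂ L] [LieAlgebra.IsSemisimple ℂ L]
    {H : LieSubalgebra ℂ L} [H.IsCartanSubalgebra] {r : ℕ} {α : Fin r → Module.Dual ℂ H}
    {hc : Fin r → H} {e f : Fin r → L} (C : Chev H α hc e f)
    (D' : Dat H r) (hD2 : D'.hc = -hc) (hDe : D'.e = f) (hDf : D'.f = e)
    {μ κ : Module.Dual ℂ H} (hμ : ∀ j, ∃ n : ℕ, 2 ≤ n ∧ μ (hc j) = (n : ℂ))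
    (hκ : ∀ j, ∃ n : ℕ, κ (hc j) = (n : ℂ))
    {V : Type} [AddCommGroup V] [Module ℂ V] [LieRingModule L V] [LieModule ℂ L V]
    [FiniteDimensional ℂ V] (hV : IsSimpleOrder (LieSubmodule ℂ L V))
    {v : V} (hve : ∀ i, ⁅e i, v⁆ = 0) {ξ : Module.Dual ℂ V} (hξv : ξ v = 1)
    (hξ : D'.Sing (-μ) ξ) {x : L} (hx : x ∈ rootSpace H ⇑(κ - μ)) :
    ∃ ψ : Module.Dual ℂ V →ₗ[ℂ] L, ψ ξ = x ∧ (∀ i, ⁅e i, ψ⁆ = 0) ∧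
      ∀ h : H, ⁅(h : L), ψ⁆ = κ h • ψ := by
  have hξ0 : ξ ≠ 0 := by rintro rfl; simp at hξv
  have hx' := mem_rs.1 hx
  have hs := D'.dual_act_surj hV hξ hξ0
  have hIs : D'.IsHW (-μ) 1 ξ (Module.Dual.eval ℂ V v) := by
    refine ⟨by simpa using hξ, by simpa using hξv, ?_⟩
    intro i u
    rw [hDf, Module.Dual.eval_apply, Module.Dual.lie_apply, hve, map_zero, neg_zero]
  have hk : ∀ a, D'.act ξ a = 0 → D'.act x a = 0 := by
    intro a ha
    obtain ⟨m, hm⟩ := Dat.exists_mem_Lt a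
    refine D'.thmA (β := -(κ - μ)) hIs ?_ ?_ (fun P => D'.low P) ?_ ?_ m a hm ha
    · intro j
      obtain ⟨n, h2, hn⟩ := hμ j
      exact ⟨n, h2, by rw [hD2]; simpa using hn⟩
    · intro j
      obtain ⟨n, hn⟩ := hκ j
      exact ⟨n, by rw [hD2]; simpa using hn⟩
    · intro χ y hy0 hy j
      rw [hD2]
      exact C.neg.bound (mem_rs.2 hy) hy0 j
    · intro h
      rw [hx' h, neg_neg]
  obtain ⟨ψ, hψ⟩ := factor_through (D'.act ξ) hs (D'.act x) hk
  refine ⟨ψ, ?_, ?_, ?_⟩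
  · have := hψ (Finsupp.single [] 1)
    simpa [Dat.wact] using this
  · intro i
    refine LinearMap.ext fun p => ?_
    obtain ⟨a, rfl⟩ := hs p
    rw [LieHom.lie_apply, hψ, ← hDf, ← D'.act_F, ← D'.act_F, hψ, sub_self]
    rfl
  · intro h
    refine LinearMap.ext fun p => ?_
    obtain ⟨a, rfl⟩ := hs p
    rw [LieHom.lie_apply, LinearMap.smul_apply]
    induction a using Finsupp.induction_linear with
    | zero => simp
    | add a b ha hb =>
      rw [map_add, lie_add, map_add, map_add, lie_add, smul_add, ← ha, ← hb]; abel
    | single w c =>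
      have h1 : ψ (D'.wact ξ w) = D'.wact x w := by
        have := hψ (Finsupp.single w 1)
        simpa [D'.act_single] using this
      rw [D'.act_single, map_smul, lie_smul, lie_smul, map_smul, D'.h_wact' h ξ _ hξ.2,
        map_smul, h1, D'.h_wact' h x _ hx']
      simp only [LinearMap.sub_apply, LinearMap.neg_apply]
      module

/-- If `β := ν̄ - μ` is a root and `⟨μ, α_j∨⟩ ≥ 2` for every simple root
`α_j`, then the `𝔤`-invariant subspace of `adj(𝔤) ⊗ V_μ ⊗ V_ν` has dimension exactly `1`. -/
theorem statement4
    {L : Type} [LieRing L] [LieAlgebra ℂ L] [FiniteDimensional ℂ L]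
    [LieAlgebra.IsSemisimple ℂ L]
    (H : LieSubalgebra ℂ L) [H.IsCartanSubalgebra]
    {r : ℕ} (α : Fin r → Module.Dual ℂ H) (hc : Fin r → H)
    (hbase : IsBase H α) (hcoroot : ∀ j, IsCoroot H (α j) (hc j))
    (μ ν νbar : Module.Dual ℂ H) (hμ : ∀ j, ∃ n : ℕ, 2 ≤ n ∧ μ (hc j) = (n : ℂ))
    (hν : IsDomInt hc ν)
    (Vμ : Type) [AddCommGroup Vμ] [Module ℂ Vμ] [LieRingModule L Vμ]
    [LieModule ℂ L Vμ] [FiniteDimensional ℂ Vμ]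
    (Vν : Type) [AddCommGroup Vν] [Module ℂ Vν] [LieRingModule L Vν]
    [LieModule ℂ L Vν] [FiniteDimensional ℂ Vν]
    (Wν : Type) [AddCommGroup Wν] [Module ℂ Wν] [LieRingModule L Wν]
    [LieModule ℂ L Wν] [FiniteDimensional ℂ Wν]
    (hVμ : IsHWIrrep H α μ Vμ)
    (hVν : IsHWIrrep H α ν Vν) (hWν : IsHWIrrep H α νbar Wν)
    (hdual : IsDualPair (L := L) Wν Vν)
    (hroot : IsRoot H (νbar - μ)) :
    Module.finrank ℂ (maxTrivSubmodule ℂ L (L ⊗[ℂ] (Vμ ⊗[ℂ] Vν))) = 1 := by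
  obtain ⟨e, f, C⟩ := exists_chev hbase hcoroot
  obtain ⟨D, hDα, hDc, hDe, hDf⟩ := C.exists_dat
  obtain ⟨D', hDα', hDc', hDe', hDf'⟩ := C.neg.exists_dat
  obtain ⟨hV, v, hv0, hvw, hve⟩ := hVμ
  obtain ⟨hW, w, hw0, hww, hwe⟩ := hWν
  have hpos : ∀ i, IsPosRoot H α (α i) := fun i => ⟨hbase.isRoot i, Chev.pos_simple i⟩
  have hve' : ∀ i, ⁅e i, v⁆ = 0 := fun i => hve _ (hpos i) _ (C.e_mem i)
  have hwe' : ∀ i, ⁅e i, w⁆ = 0 := fun i => hwe _ (hpos i) _ (C.e_mem i)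
  have hvS : D.Sing μ v := ⟨by rw [hDe]; exact hve', hvw⟩
  have hwS : D.Sing νbar w := ⟨by rw [hDe]; exact hwe', hww⟩
  obtain ⟨ξ, hξv, hξf, hξh⟩ := D.exists_dualvec hV hvS hv0
  have hξ0 : ξ ≠ 0 := by rintro rfl; simp at hξv
  have hξw : ∀ h : H, ⁅(h : L), ξ⁆ = (-μ) h • ξ := by
    intro h
    refine LinearMap.ext fun u => ?_
    rw [Module.Dual.lie_apply, hξh]
    simp
  have hξS : D'.Sing (-μ) ξ := by
    refine ⟨fun i => ?_, hξw⟩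
    refine LinearMap.ext fun u => ?_
    rw [Module.Dual.lie_apply, hDe', ← hDf, hξf]
    simp
  have hs := D'.dual_act_surj hV hξS hξ0
  have hκ : ∀ j, ∃ n : ℕ, νbar (hc j) = (n : ℂ) := by
    intro j
    rw [← hDc]
    exact D.sing_nat hwS hw0 j
  obtain ⟨x, hx, hx0⟩ := hroot.exists_ne
  obtain ⟨ψ, hψξ, hψe, hψw⟩ := exists_psi C D' hDc' hDe' hDf' hμ hκ hV hve' hξv hξS hx
  obtain ⟨Φ, hΦ, hΦw⟩ := D.thmB hW hwS (z := ψ) ⟨by rw [hDe]; exact hψe, hψw⟩ hw0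
  obtain ⟨B, hB1, hB2, hB3⟩ := hdual
  obtain ⟨Θ, hΘ⟩ := exists_theta (L := L) (V := Vμ) B hB1 hB2
  have hE := theta_equiv B hB3 Θ hΘ
  -- the invariant vector
  have ht0 : ∀ y : L, ⁅y, Θ.symm Φ⁆ = 0 := by
    intro y
    apply Θ.injective
    rw [map_zero]
    refine LinearMap.ext fun u => LinearMap.ext fun p => ?_
    rw [hE, LinearEquiv.apply_symm_apply, hΦ, LieHom.lie_apply]
    simp
  have ht0' : Θ.symm Φ ≠ 0 := by
    intro h
    have h1 : Φ = 0 := by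
      rw [← Θ.apply_symm_apply Φ, h, map_zero]
    rw [h1, LinearMap.zero_apply] at hΦw
    rw [← hΦw, LinearMap.zero_apply] at hψξ
    exact hx0 hψξ.symm
  -- vanishing criterion
  have hvan : ∀ s : L ⊗[ℂ] (Vμ ⊗[ℂ] Vν), (∀ y : L, ⁅y, s⁆ = 0) → Θ s w ξ = 0 → s = 0 := by
    intro s hs0 hsξ
    have hinv : ∀ (y : L) u p, ⁅y, Θ s u p⁆ = Θ s ⁅y, u⁆ p + Θ s u ⁅y, p⁆ := by
      intro y u p
      have h1 := hE y s u p
      rw [hs0 y, map_zero, LinearMap.zero_apply, LinearMap.zero_apply, sub_sub] at h1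
      exact sub_eq_zero.1 h1.symm
    have hw1 : Θ s w = 0 := by
      refine LinearMap.ext fun p => ?_
      obtain ⟨a, rfl⟩ := hs p
      rw [D'.act_inter (Θ s w) (by
        intro i u
        rw [hinv, hDf', hwe', map_zero, LinearMap.zero_apply, zero_add]), hsξ, LinearMap.zero_apply]
      have h1 := D'.act_inter (0 : L →ₗ[ℂ] L) (by intro i u; simp) 0 a
      simpa using h1.symm
    let K : LieSubmodule ℂ L Wν := { LinearMap.ker (Θ s) with
      lie_mem := fun {y u} hu => by
        change ⁅y, u⁆ ∈ LinearMap.ker (Θ s)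
        have hu' : Θ s u = 0 := hu
        rw [LinearMap.mem_ker]
        refine LinearMap.ext fun p => ?_
        have h1 := hinv y u p
        rw [hu', LinearMap.zero_apply, LinearMap.zero_apply, lie_zero, add_zero] at h1
        rw [← h1, LinearMap.zero_apply] }
    have hwK : w ∈ K := hw1
    have hK : K = ⊤ := by
      rcases hW.eq_bot_or_eq_top K with h | h
      · rw [h] at hwK
        exact absurd ((LieSubmodule.mem_bot w).1 hwK) hw0
      · exact h
    apply Θ.injective
    rw [map_zero]
    refine LinearMap.ext fun u => ?_
    have hu : u ∈ K := by rw [hK]; trivial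
    exact hu
  let t0 : maxTrivSubmodule ℂ L (L ⊗[ℂ] (Vμ ⊗[ℂ] Vν)) :=
    ⟨Θ.symm Φ, (mem_maxTrivSubmodule ℂ L _ _).2 ht0⟩
  have ht00 : t0 ≠ 0 := fun h => ht0' (congrArg Subtype.val h)
  refine (finrank_eq_one_iff_of_nonzero' t0 ht00).2 ?_
  rintro ⟨t, ht⟩
  have ht' := (mem_maxTrivSubmodule ℂ L _ _).1 ht
  have hmem : Θ t w ξ ∈ rootSpace H ⇑(νbar - μ) := by
    rw [mem_rs]
    intro h
    have h1 := hE (h : L) t w ξ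
    rw [ht', map_zero, LinearMap.zero_apply, LinearMap.zero_apply, sub_sub] at h1
    rw [sub_eq_zero.1 h1.symm, hww, hξw]
    simp only [map_smul, LinearMap.smul_apply, LinearMap.sub_apply, LinearMap.neg_apply]
    module
  obtain ⟨c, hcx⟩ := dim1 hroot hx hx0 hmem
  refine ⟨c, ?_⟩
  apply Subtype.ext
  change c • Θ.symm Φ = t
  symm
  rw [← sub_eq_zero]
  apply hvan
  · intro y
    rw [lie_sub, lie_smul, ht', ht0, smul_zero, sub_zero]
  · rw [map_sub, map_smul, LinearEquiv.apply_symm_apply, LinearMap.sub_apply, LinearMap.smul_apply,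
      LinearMap.sub_apply, LinearMap.smul_apply, hΦw, hψξ, hcx, sub_self]

end AdjPaper
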